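/- arXiv:0804.4894 — 5 statements merged into one kernel-verified Lean document; each statement's English description precedes it below -/
import Mathlib

section
/- There exist absolute constants C > 0 and c > 0 such that the following holds for every odd prime power q. Let E ⊆ F_q² satisfy |E| ≥ ρ q² for some ρ with C/√q ≤ ρ ≤ 1. Then the number of congruence classes of triangles determined by E satisfies |T₃(E)| ≥ c ρ q³. -/
/-!
The number of classes is bounded below by Cauchy-Schwarz: with `e = |E|`, it is at least `e⁶ / N₃`,
where `N₃` counts ordered pairs of congruent triangles with vertices in `E`.

* Writing a rotation as `(a, b)` with `a² + b² = 1`, the number `N₃` is at most the number of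
  `(rotation, τ, x, y, z)` such that `x, y, z` and their images lie in `E`. Forgetting `z` costs a
  factor of at most `e`, so it suffices to count the `(rotation, τ, x, y)`
  (`card_motions_three_le`).
* There are at most `q² e²` of these with `x = y`. If `x ≠ y`, the rigid motion is determined by
  `x, y` and their images, because a rotation fixing a nonzero vector is trivial, even if that
  vector is isotropic. So these are at most the number `N` of quadruples in `E⁴` with
  `‖x - y‖ = ‖x' - y'‖` (`card_motions_two_le`).
* `N` counts incidences between `e²` points and `e²` hyperplanes: once `y, y'` and
  `w = ‖y‖ - ‖y'‖` are given, the equation is affine in `(y, y', w)`, with coefficients depending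
  on `(x, x')`. A second moment computation over all of `F⁴ × F` (`incidence_bound`) gives
  `N ≤ e⁴ / q + q² e²` (`card_isometric_le`).

For `e² ≥ q³` all this gives `N₃ ≤ 3 e⁵ / q`, so there are at least `e q / 3` classes.
-/

open Matrix

section

open Finset

/-- Cauchy-Schwarz for the number of values of a map, in terms of its number of collisions. -/
lemma card_sq_le_image_mul_collisions {α β : Type*} [DecidableEq β] (S : Finset α) (f : α → β) :
    (S.card : ℝ) ^ 2 ≤ (S.image f).card * (((S ×ˢ S).filter fun p => f p.1 = f p.2).card : ℝ) := by
  have h1 : S.card = ∑ b ∈ S.image f, (S.filter fun a => f a = b).card :=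
    card_eq_sum_card_image f S
  have h2 : ((S ×ˢ S).filter fun p => f p.1 = f p.2).card
      = ∑ b ∈ S.image f, (S.filter fun a => f a = b).card ^ 2 := by
    rw [card_eq_sum_card_fiberwise (f := fun p => f p.1) (t := S.image f)]
    · refine sum_congr rfl fun b _ => ?_
      rw [sq, ← card_product]
      congr 1
      ext ⟨x, y⟩
      simp only [mem_filter, mem_product]
      grind
    · intro p hp
      simp only [coe_filter, mem_product, Set.mem_ofPred_eq] at hp
      exact mem_coe.2 (mem_image_of_mem f hp.1.1)
  rw [h2, h1]
  push_cast
  exact sq_sum_le_card_mul_sum_sq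

/-- Incidences between a family `A` of graphs of functions `φ X : W → F` and a set `B` of points of
`W × F`. If distinct graphs meet in at most a `1 / |F|` proportion of the base, then the number of
incidences deviates from `|A| |B| / |F|` by at most the square root of `|B| |W| |A|`. -/
lemma incidence_bound {α W F : Type*} [Fintype W] [Fintype F] [Nonempty F] [DecidableEq F]
    [DecidableEq α]
    (A : Finset α) (B : Finset (W × F)) (φ : α → W → F)
    (h : ∀ X ∈ A, ∀ X' ∈ A, X ≠ X' →
      (univ.filter fun Y => φ X Y = φ X' Y).card * Fintype.card F ≤ Fintype.card W) :
    ((((A ×ˢ B).filter fun p => φ p.1 p.2.1 = p.2.2).card : ℝ)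
      - A.card * B.card / Fintype.card F) ^ 2 ≤ B.card * (Fintype.card W * A.card) := by
  have hq : (0 : ℝ) < Fintype.card F := by exact_mod_cast Fintype.card_pos
  set q : ℝ := (Fintype.card F : ℝ) with hqdef
  set f : W × F → ℝ := fun b => ∑ X ∈ A, if φ X b.1 = b.2 then 1 else 0 with hf
  have hI : (((A ×ˢ B).filter fun p => φ p.1 p.2.1 = p.2.2).card : ℝ) = ∑ b ∈ B, f b := by
    rw [card_filter, sum_product_right]
    push_cast
    rfl
  have hI2 : (((A ×ˢ B).filter fun p => φ p.1 p.2.1 = p.2.2).card : ℝ)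
      - A.card * B.card / q = ∑ b ∈ B, (f b - A.card / q) := by
    rw [hI, sum_sub_distrib, sum_const, nsmul_eq_mul]
    ring
  have hm1 : ∑ b, f b = A.card * Fintype.card W := by
    simp only [hf]
    rw [sum_comm]
    simp only [Fintype.sum_prod_type, sum_ite_eq, mem_univ, if_true, sum_const, card_univ,
      nsmul_eq_mul, mul_one]
  have hm2 : ∑ b, f b ^ 2 ≤ A.card * Fintype.card W + A.card ^ 2 * (Fintype.card W / q) := by
    have e1 : ∑ b, f b ^ 2
        = ∑ X ∈ A, ∑ X' ∈ A, ((univ.filter fun Y => φ X Y = φ X' Y).card : ℝ) := by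
      simp only [hf, sq, sum_mul_sum]
      rw [sum_comm]
      refine sum_congr rfl fun X _ => ?_
      rw [sum_comm]
      refine sum_congr rfl fun X' _ => ?_
      rw [Fintype.sum_prod_type, card_filter]
      push_cast
      refine sum_congr rfl fun Y _ => ?_
      simp [eq_comm]
    have e2 : ∀ X ∈ A, ∀ X' ∈ A, ((univ.filter fun Y => φ X Y = φ X' Y).card : ℝ)
        ≤ (if X = X' then (Fintype.card W : ℝ) else 0) + Fintype.card W / q := by
      intro X hX X' hX'
      split_ifs with hXX
      · have h1 : ((univ.filter fun Y => φ X Y = φ X' Y).card : ℝ) ≤ Fintype.card W := by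
          exact_mod_cast card_le_univ _
        have : (0 : ℝ) ≤ Fintype.card W / q := by positivity
        linarith
      · rw [zero_add, le_div_iff₀ hq]
        rw [hqdef]
        exact_mod_cast h X hX X' hX' hXX
    rw [e1]
    refine (sum_le_sum fun X hX => sum_le_sum fun X' hX' => e2 X hX X' hX').trans ?_
    apply le_of_eq
    have e3 : ∀ X ∈ A, ∑ X' ∈ A, ((if X = X' then (Fintype.card W : ℝ) else 0)
        + Fintype.card W / q) = Fintype.card W + A.card * (Fintype.card W / q) := by
      intro X hX
      rw [sum_add_distrib, sum_ite_eq, if_pos hX, sum_const, nsmul_eq_mul]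
    rw [sum_congr rfl e3, sum_const, nsmul_eq_mul]
    ring
  have hvar : ∑ b, (f b - A.card / q) ^ 2 ≤ Fintype.card W * A.card := by
    have e : ∑ b, (f b - A.card / q) ^ 2
        = ∑ b, f b ^ 2 - 2 * (A.card / q) * ∑ b, f b
          + (Fintype.card W * q) * (A.card / q) ^ 2 := by
      rw [mul_sum, ← sum_sub_distrib]
      have : (Fintype.card W * q) * (A.card / q) ^ 2 = ∑ _b : W × F, (A.card / q : ℝ) ^ 2 := by
        simp [hqdef]
      rw [this, ← sum_add_distrib]
      exact sum_congr rfl fun b _ => by ring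
    rw [e, hm1]
    have e' : (Fintype.card W * q) * ((A.card : ℝ) / q) ^ 2
        = A.card ^ 2 * (Fintype.card W / q) := by
      field_simp
    have e'' : 2 * ((A.card : ℝ) / q) * (A.card * Fintype.card W)
        = 2 * (A.card ^ 2 * (Fintype.card W / q)) := by ring
    rw [e', e'']
    linarith
  rw [hI2]
  calc _ ≤ (B.card : ℝ) * ∑ b ∈ B, (f b - A.card / q) ^ 2 := sq_sum_le_card_mul_sum_sq
    _ ≤ B.card * ∑ b, (f b - A.card / q) ^ 2 := by
        gcongr
        exact subset_univ B
    _ ≤ _ := by gcongr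

/-- A level set of a surjective homomorphism `W → F` contains a `1 / |F|` proportion of `W`. -/
lemma card_level_mul {W F : Type*} [AddCommGroup W] [AddCommGroup F] [Fintype W] [Fintype F]
    [DecidableEq F] (L : W →+ F) (hL : Function.Surjective L) (c : F) :
    (univ.filter fun Y => L Y = c).card * Fintype.card F = Fintype.card W := by
  have h : Fintype.card W = ∑ d : F, (univ.filter fun Y => L Y = d).card :=
    card_eq_sum_card_fiberwise (fun _ _ => by simp)
  have h2 : ∀ d : F, (univ.filter fun Y => L Y = d).card = (univ.filter fun Y => L Y = c).card :=
    fun d => AddMonoidHom.card_fiber_eq_of_mem_range L (by simpa using hL d) (by simpa using hL c)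
  rw [h, sum_congr rfl fun d _ => h2 d, sum_const, card_univ, smul_eq_mul, mul_comm]

variable {F : Type} [Field F]

/-- The form `‖x‖ = x₁² + x₂²` on the plane. -/
def nf (x : Fin 2 → F) : F := x 0 ^ 2 + x 1 ^ 2

/-- The rigid motion with rotation matrix `!![a, -b; b, a]`, where `r = (a, b)`, and translation
part `τ`. It is a rigid motion only if `a² + b² = 1`. -/
def act (r : F × F) (τ x : Fin 2 → F) : Fin 2 → F :=
  ![r.1 * x 0 - r.2 * x 1 + τ 0, r.2 * x 0 + r.1 * x 1 + τ 1]

/-- Every element of the special orthogonal group has the form `!![a, -b; b, a]`. -/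
lemma exists_rotation (O : Matrix (Fin 2) (Fin 2) F) (h : Oᵀ * O = 1) (hd : O.det = 1) :
    ∃ r : F × F, r.1 ^ 2 + r.2 ^ 2 = 1 ∧ ∀ τ x, O.mulVec x + τ = act r τ x := by
  have h00 := congrFun (congrFun h 0) 0
  have h01 := congrFun (congrFun h 0) 1
  simp [Matrix.mul_apply, Fin.sum_univ_two] at h00 h01
  rw [Matrix.det_fin_two] at hd
  -- With `O = !![a, c; b, d]`, the equations are `a² + b² = 1`, `ac + bd = 0`, `ad - bc = 1`.
  have h3 : O 0 1 = - O 1 0 := by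
    linear_combination (-O 0 1) * h00 + O 0 0 * h01 - O 1 0 * hd
  have h4 : O 1 1 = O 0 0 := by
    linear_combination (-O 1 1) * h00 + O 1 0 * h01 + O 0 0 * hd
  refine ⟨(O 0 0, O 1 0), by linear_combination h00, fun τ x => ?_⟩
  ext i
  fin_cases i
  · simp [act, h3]
    ring
  · simp [act, h4]

lemma nf_act (r : F × F) (hr : r.1 ^ 2 + r.2 ^ 2 = 1) (τ x y : Fin 2 → F) :
    nf (act r τ x - act r τ y) = nf (x - y) := by
  simp only [nf, act, Pi.sub_apply, Matrix.cons_val_zero, Matrix.cons_val_one]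
  linear_combination ((x 0 - y 0) ^ 2 + (x 1 - y 1) ^ 2) * hr

/-- The stabilizer of a nonzero vector in the rotation group is trivial, so a rigid motion is
determined by the images of two distinct points. -/
lemma act_inj (h2 : (2 : F) ≠ 0) (r s : F × F) (hr : r.1 ^ 2 + r.2 ^ 2 = 1)
    (hs : s.1 ^ 2 + s.2 ^ 2 = 1)
    (τ σ x y : Fin 2 → F) (hxy : x ≠ y) (hx : act r τ x = act s σ x)
    (hy : act r τ y = act s σ y) : r = s ∧ τ = σ := by
  have x0 := congrFun hx 0
  have x1 := congrFun hx 1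
  have y0 := congrFun hy 0
  have y1 := congrFun hy 1
  simp only [act, Matrix.cons_val_zero, Matrix.cons_val_one] at x0 x1 y0 y1
  have hrs : r = s := by
    obtain ⟨a, b⟩ := r
    obtain ⟨c, d⟩ := s
    simp only at *
    set u := x 0 - y 0 with hu
    set v := x 1 - y 1 with hv
    have e0 : (a - c) * u = (b - d) * v := by
      rw [hu, hv]; linear_combination x0 - y0
    have e1 : (b - d) * u = -((a - c) * v) := by
      rw [hu, hv]; linear_combination x1 - y1
    have huv : u ≠ 0 ∨ v ≠ 0 := by
      by_contra! hc
      apply hxy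
      ext i
      fin_cases i
      · exact sub_eq_zero.1 hc.1
      · exact sub_eq_zero.1 hc.2
    -- The difference of the two rotations is singular.
    have hdet : (a - c) ^ 2 + (b - d) ^ 2 = 0 := by
      rcases huv with hu0 | hv0
      · apply (mul_eq_zero.1 (_ : ((a - c) ^ 2 + (b - d) ^ 2) * u = 0)).resolve_right hu0
        linear_combination (a - c) * e0 + (b - d) * e1
      · apply (mul_eq_zero.1 (_ : ((a - c) ^ 2 + (b - d) ^ 2) * v = 0)).resolve_right hv0
        linear_combination (a - c) * e1 - (b - d) * e0
    -- On the unit circle this forces `ac + bd = 1`, and then `ad - bc = 0`.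
    have hdot : a * c + b * d = 1 := by
      apply mul_left_cancel₀ h2
      linear_combination hr + hs - hdet
    have hcross : a * d - b * c = 0 := by
      apply pow_eq_zero_iff (two_ne_zero) |>.1
      linear_combination (c ^ 2 + d ^ 2) * hr + hs - (a * c + b * d + 1) * hdot
    have ha : a = c := by linear_combination (-a) * hs + c * hdot + d * hcross
    have hb : b = d := by linear_combination (-b) * hs + d * hdot - c * hcross
    rw [ha, hb]
  refine ⟨hrs, ?_⟩
  subst hrs
  ext i
  fin_cases i
  · exact add_left_cancel x0
  · exact add_left_cancel x1

variable [Fintype F] [DecidableEq F]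

/-- The number of quadruples in `E⁴` with `‖x - y‖ = ‖x' - y'‖`, arranged as
`((x, x'), (y, y'))`, is at most `|E|⁴ / q + q² |E|²`. -/
lemma card_isometric_le (h2 : (2 : F) ≠ 0) (E : Finset (Fin 2 → F)) :
    ((((E ×ˢ E) ×ˢ (E ×ˢ E)).filter fun p =>
        nf (p.1.1 - p.2.1) = nf (p.1.2 - p.2.2)).card : ℝ)
      ≤ (E.card : ℝ) ^ 4 / Fintype.card F + (Fintype.card F : ℝ) ^ 2 * (E.card : ℝ) ^ 2 := by
  -- `φ X Y = w` is the equation `‖x - y‖ = ‖x' - y'‖` with `‖y‖ - ‖y'‖` replaced by `w`.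
  let φ : (Fin 2 → F) × (Fin 2 → F) → (Fin 2 → F) × (Fin 2 → F) → F := fun X Y =>
    2 * (X.1 0 * Y.1 0 + X.1 1 * Y.1 1) - 2 * (X.2 0 * Y.2 0 + X.2 1 * Y.2 1) - nf X.1 + nf X.2
  let g : (Fin 2 → F) × (Fin 2 → F) → ((Fin 2 → F) × (Fin 2 → F)) × F := fun Y =>
    (Y, nf Y.1 - nf Y.2)
  have hg : Function.Injective g := fun Y Y' h => congrArg Prod.fst h
  have key := incidence_bound (E ×ˢ E) ((E ×ˢ E).image g) φ ?_
  · have hc : (((E ×ˢ E) ×ˢ (E ×ˢ E)).filter fun p =>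
        nf (p.1.1 - p.2.1) = nf (p.1.2 - p.2.2)).card
        ≤ (((E ×ˢ E) ×ˢ ((E ×ˢ E).image g)).filter fun p => φ p.1 p.2.1 = p.2.2).card := by
      apply card_le_card_of_injOn (fun p => (p.1, g p.2))
      · intro p hp
        simp only [coe_filter, mem_product, Set.mem_ofPred_eq] at hp ⊢
        refine ⟨⟨hp.1.1, mem_image_of_mem g (mem_product.2 hp.1.2)⟩, ?_⟩
        have := hp.2
        simp only [nf, φ, g, Pi.sub_apply] at this ⊢
        linear_combination -this
      · intro p _ p' _ h
        simp only [Prod.mk.injEq] at h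
        exact Prod.ext h.1 (hg h.2)
    have hc' : ((((E ×ˢ E) ×ˢ (E ×ˢ E)).filter fun p =>
        nf (p.1.1 - p.2.1) = nf (p.1.2 - p.2.2)).card : ℝ)
        ≤ (((E ×ˢ E) ×ˢ ((E ×ˢ E).image g)).filter fun p => φ p.1 p.2.1 = p.2.2).card := by
      exact_mod_cast hc
    rw [card_image_of_injective _ hg, card_product] at key
    simp only [Fintype.card_prod, Fintype.card_fun, Fintype.card_fin, Nat.cast_mul,
      Nat.cast_pow] at key
    refine hc'.trans ?_
    have k2 := abs_le_of_sq_le_sq (b := (Fintype.card F : ℝ) ^ 2 * (E.card : ℝ) ^ 2)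
      (key.trans (le_of_eq (by ring))) (by positivity)
    have e : (E.card : ℝ) * E.card * (E.card * E.card) / Fintype.card F
        = (E.card : ℝ) ^ 4 / Fintype.card F := by ring
    rw [e] at k2
    linarith [(abs_le.1 k2).2]
  · intro X _ X' _ hne
    let L : (Fin 2 → F) × (Fin 2 → F) →ₗ[F] F :=
      { toFun := fun Y => 2 * ((X.1 0 - X'.1 0) * Y.1 0 + (X.1 1 - X'.1 1) * Y.1 1)
          - 2 * ((X.2 0 - X'.2 0) * Y.2 0 + (X.2 1 - X'.2 1) * Y.2 1)
        map_add' := fun Y Y' => by simp; ring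
        map_smul' := fun c Y => by simp; ring }
    have hL : L ≠ 0 := by
      intro h0
      apply hne
      have hz : ∀ Y, L Y = 0 := fun Y => by rw [h0]; rfl
      have l1 := hz (![1, 0], 0)
      have l2 := hz (![0, 1], 0)
      have l3 := hz (0, ![1, 0])
      have l4 := hz (0, ![0, 1])
      simp [L, h2, sub_eq_zero] at l1 l2 l3 l4
      refine Prod.ext ?_ ?_ <;> ext i <;> fin_cases i <;> assumption
    have hs : Function.Surjective L := LinearMap.surjective hL
    refine le_of_eq (Eq.trans ?_
      (card_level_mul L.toAddMonoidHom hs (nf X.1 - nf X.2 - nf X'.1 + nf X'.2)))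
    congr 2
    refine filter_congr fun Y _ => ?_
    simp only [φ, L, LinearMap.toAddMonoidHom_coe,
      LinearMap.coe_mk, AddHom.coe_mk]
    constructor <;> intro h <;> linear_combination h

/-- The pairs of points of `E` together with a rigid motion mapping both into `E`. -/
def motionsTwo (E : Finset (Fin 2 → F)) :
    Finset (((F × F) × (Fin 2 → F)) × ((Fin 2 → F) × (Fin 2 → F))) :=
  univ.filter fun p => p.1.1.1 ^ 2 + p.1.1.2 ^ 2 = 1 ∧ p.2.1 ∈ E ∧ p.2.2 ∈ E ∧
    act p.1.1 p.1.2 p.2.1 ∈ E ∧ act p.1.1 p.1.2 p.2.2 ∈ E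

/-- The triples of points of `E` together with a rigid motion mapping all of them into `E`. -/
def motionsThree (E : Finset (Fin 2 → F)) :
    Finset (((F × F) × (Fin 2 → F)) × ((Fin 2 → F) × (Fin 2 → F) × (Fin 2 → F))) :=
  univ.filter fun p => p.1.1.1 ^ 2 + p.1.1.2 ^ 2 = 1 ∧ p.2.1 ∈ E ∧ p.2.2.1 ∈ E ∧ p.2.2.2 ∈ E ∧
    act p.1.1 p.1.2 p.2.1 ∈ E ∧ act p.1.1 p.1.2 p.2.2.1 ∈ E ∧ act p.1.1 p.1.2 p.2.2.2 ∈ E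

lemma card_motions_three_le (E : Finset (Fin 2 → F)) :
    (motionsThree E).card ≤ (motionsTwo E).card * E.card := by
  rw [← card_product]
  apply card_le_card_of_injOn (fun p => ((p.1, (p.2.1, p.2.2.1)), p.2.2.2))
  · intro p hp
    simp only [motionsThree, motionsTwo, coe_filter, mem_coe, mem_product, mem_filter, mem_univ,
      true_and, Set.mem_ofPred_eq] at hp ⊢
    tauto
  · rintro ⟨m, x, y, z⟩ _ ⟨m', x', y', z'⟩ _ h
    simp only [Prod.mk.injEq] at h ⊢
    tauto

/-- A degenerate pair contributes one motion per rotation and target; a nondegenerate pair and its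
image determine the motion. -/
lemma card_motions_two_le (h2 : (2 : F) ≠ 0) (E : Finset (Fin 2 → F)) :
    (motionsTwo E).card ≤ Fintype.card F ^ 2 * E.card ^ 2 +
      (((E ×ˢ E) ×ˢ (E ×ˢ E)).filter fun p =>
        nf (p.1.1 - p.2.1) = nf (p.1.2 - p.2.2)).card := by
  rw [← card_filter_add_card_filter_not (s := motionsTwo E) (fun p => p.2.1 = p.2.2)]
  apply add_le_add
  · have hc : Fintype.card F ^ 2 * E.card ^ 2 = ((univ : Finset (F × F)) ×ˢ (E ×ˢ E)).card := by
      simp only [card_product, card_univ, Fintype.card_prod]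
      ring
    rw [hc]
    apply card_le_card_of_injOn (fun p => (p.1.1, (p.2.1, act p.1.1 p.1.2 p.2.1)))
    · intro p hp
      simp only [motionsTwo, coe_filter, mem_coe, mem_product, mem_filter, mem_univ,
        true_and, Set.mem_ofPred_eq] at hp ⊢
      tauto
    · rintro ⟨⟨r, τ⟩, x, y⟩ hp ⟨⟨r', τ'⟩, x', y'⟩ hp' h
      simp only [coe_filter, Set.mem_ofPred_eq] at hp hp'
      simp only [Prod.mk.injEq] at h
      obtain ⟨rfl, rfl, h⟩ := h
      have e1 := hp.2
      have e2 := hp'.2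
      subst e1 e2
      have hτ : τ = τ' := by
        have a0 := congrFun h 0
        have a1 := congrFun h 1
        simp only [act, Matrix.cons_val_zero, Matrix.cons_val_one] at a0 a1
        ext i
        fin_cases i
        · exact add_left_cancel a0
        · exact add_left_cancel a1
      rw [hτ]
  · apply card_le_card_of_injOn
      (fun p => ((p.2.1, act p.1.1 p.1.2 p.2.1), (p.2.2, act p.1.1 p.1.2 p.2.2)))
    · intro p hp
      simp only [motionsTwo, coe_filter, mem_product, mem_filter, mem_univ,
        true_and, Set.mem_ofPred_eq] at hp ⊢
      refine ⟨by tauto, (nf_act _ hp.1.1 _ _ _).symm⟩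
    · rintro ⟨⟨r, τ⟩, x, y⟩ hp ⟨⟨r', τ'⟩, x', y'⟩ hp' h
      simp only [motionsTwo, coe_filter, mem_filter, mem_univ, true_and,
        Set.mem_ofPred_eq] at hp hp'
      simp only [Prod.mk.injEq] at h
      obtain ⟨⟨rfl, hx⟩, rfl, hy⟩ := h
      obtain ⟨rfl, rfl⟩ := act_inj h2 r r' hp.1.1 hp'.1.1 τ τ' x y hp.2 hx hy
      rfl

/-- If the fibres of `f` on `E³` consist of pairwise congruent triples, then `f` takes at least
`q |E| / 3` values on `E³`, provided `|E|² ≥ q³`. -/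
lemma card_classes_ge {β : Type*} [DecidableEq β] (h2 : (2 : F) ≠ 0) (E : Finset (Fin 2 → F))
    (f : (Fin 2 → F) × (Fin 2 → F) × (Fin 2 → F) → β)
    (hf : ∀ s ∈ E ×ˢ E ×ˢ E, ∀ t ∈ E ×ˢ E ×ˢ E, f s = f t → ∃ r : F × F, ∃ τ,
      r.1 ^ 2 + r.2 ^ 2 = 1 ∧ t = (act r τ s.1, act r τ s.2.1, act r τ s.2.2))
    (hE : (Fintype.card F : ℝ) ^ 3 ≤ (E.card : ℝ) ^ 2) :
    (Fintype.card F : ℝ) * E.card / 3 ≤ ((E ×ˢ E ×ˢ E).image f).card := by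
  have hq : (0 : ℝ) < Fintype.card F := by exact_mod_cast Fintype.card_pos
  have hcs := card_sq_le_image_mul_collisions (E ×ˢ E ×ˢ E) f
  have hcoll : (((E ×ˢ E ×ˢ E) ×ˢ (E ×ˢ E ×ˢ E)).filter fun p => f p.1 = f p.2).card
      ≤ (motionsThree E).card := by
    apply card_le_card_of_surjOn
      (fun p => (p.2, (act p.1.1 p.1.2 p.2.1, act p.1.1 p.1.2 p.2.2.1, act p.1.1 p.1.2 p.2.2.2)))
    rintro ⟨s, t⟩ hp
    simp only [coe_filter, Set.mem_ofPred_eq, mem_product (s := E ×ˢ E ×ˢ E)] at hp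
    obtain ⟨r, τ, hr, rfl⟩ := hf s hp.1.1 t hp.1.2 hp.2
    refine ⟨((r, τ), s), ?_, rfl⟩
    simp only [mem_product] at hp
    simp only [motionsThree, mem_coe, mem_filter, mem_univ, true_and]
    tauto
  have h3 := card_motions_three_le E
  have h4 := card_motions_two_le h2 E
  have h5 := card_isometric_le h2 E
  have hcollR : ((((E ×ˢ E ×ˢ E) ×ˢ (E ×ˢ E ×ˢ E)).filter fun p => f p.1 = f p.2).card : ℝ)
      ≤ (motionsTwo E).card * E.card := by exact_mod_cast hcoll.trans h3
  have h4R : ((motionsTwo E).card : ℝ) ≤ (Fintype.card F : ℝ) ^ 2 * (E.card : ℝ) ^ 2 +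
      (((E ×ˢ E) ×ˢ (E ×ˢ E)).filter fun p =>
        nf (p.1.1 - p.2.1) = nf (p.1.2 - p.2.2)).card := by exact_mod_cast h4
  simp only [card_product, Nat.cast_mul] at hcs
  set q : ℝ := (Fintype.card F : ℝ)
  set e : ℝ := (E.card : ℝ)
  have he : 0 < e := by
    have : 0 < e ^ 2 := lt_of_lt_of_le (by positivity) hE
    exact lt_of_le_of_ne (Nat.cast_nonneg _) (fun h => by rw [← h] at this; norm_num at this)
  have h6 : q ^ 2 * e ^ 2 ≤ e ^ 4 / q := by
    rw [le_div_iff₀ hq]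
    nlinarith [mul_le_mul_of_nonneg_right hE (sq_nonneg e)]
  have h7 : ((motionsTwo E).card : ℝ) ≤ 3 * (e ^ 4 / q) := by linarith
  set M : ℝ := (((E ×ˢ E ×ˢ E).image f).card : ℝ)
  have h8 : (e * (e * e)) ^ 2 ≤ M * (3 * (e ^ 4 / q) * e) :=
    hcs.trans (mul_le_mul_of_nonneg_left (hcollR.trans (by gcongr)) (Nat.cast_nonneg _))
  have h9 : (e * (e * e)) ^ 2 = (q * e / 3) * (3 * (e ^ 4 / q) * e) := by
    field_simp
  rw [h9] at h8
  exact le_of_mul_le_mul_right h8 (by positivity)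

end

/-- An analog of the Furstenberg-Katznelson-Weiss theorem: if `E ⊆ 𝔽_q²` has
`|E| ≥ ρ q²` with `C/√q ≤ ρ ≤ 1`, then the number of congruence classes of
triangles determined by `E` is at least `c ρ q³`. -/
theorem stmt_0 :
    ∃ C > (0 : ℝ), ∃ c > (0 : ℝ),
      ∀ (F : Type) [Field F] [Fintype F],
        Odd (Fintype.card F) →
        ∀ (E : Set (Fin 2 → F)) (ρ : ℝ),
          C / Real.sqrt (Fintype.card F) ≤ ρ → ρ ≤ 1 →
          ρ * (Fintype.card F : ℝ) ^ 2 ≤ (E.ncard : ℝ) →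
          c * ρ * (Fintype.card F : ℝ) ^ 3 ≤
            (Set.ncard { T : Set ((Fin 2 → F) × (Fin 2 → F) × (Fin 2 → F)) |
              ∃ x ∈ E, ∃ y ∈ E, ∃ z ∈ E,
                T = { p : (Fin 2 → F) × (Fin 2 → F) × (Fin 2 → F) |
                      p.1 ∈ E ∧ p.2.1 ∈ E ∧ p.2.2 ∈ E ∧
                      ∃ τ : Fin 2 → F, ∃ O : Matrix (Fin 2) (Fin 2) F,
                        Oᵀ * O = 1 ∧ O.det = 1 ∧
                        p.1 = O.mulVec x + τ ∧
                        p.2.1 = O.mulVec y + τ ∧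
                        p.2.2 = O.mulVec z + τ } } : ℝ) := by
  classical
  refine ⟨1, one_pos, 1 / 3, by norm_num, ?_⟩
  intro F _ _ hodd E ρ hρ _ hE
  have h2 : (2 : F) ≠ 0 := by
    apply Ring.two_ne_zero
    intro h
    have := FiniteField.even_card_iff_char_two.1 h
    rw [Nat.odd_iff] at hodd
    omega
  have hq : (0 : ℝ) < Fintype.card F := by exact_mod_cast Fintype.card_pos
  set E' : Finset (Fin 2 → F) := E.toFinset with hE'
  have hmem : ∀ x, x ∈ E' ↔ x ∈ E := fun x => Set.mem_toFinset
  rw [Set.ncard_eq_toFinset_card'] at hE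
  let f : (Fin 2 → F) × (Fin 2 → F) × (Fin 2 → F) →
      Set ((Fin 2 → F) × (Fin 2 → F) × (Fin 2 → F)) := fun t =>
    { p | p.1 ∈ E ∧ p.2.1 ∈ E ∧ p.2.2 ∈ E ∧
          ∃ τ : Fin 2 → F, ∃ O : Matrix (Fin 2) (Fin 2) F,
            Oᵀ * O = 1 ∧ O.det = 1 ∧
            p.1 = O.mulVec t.1 + τ ∧
            p.2.1 = O.mulVec t.2.1 + τ ∧
            p.2.2 = O.mulVec t.2.2 + τ }
  have hsize : (Fintype.card F : ℝ) ^ 3 ≤ (E'.card : ℝ) ^ 2 := by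
    have hs : 0 < √(Fintype.card F : ℝ) := Real.sqrt_pos.2 hq
    have hss := Real.sq_sqrt hq.le
    have h1 : 1 / √(Fintype.card F : ℝ) * (Fintype.card F : ℝ) ^ 2 ≤ E'.card :=
      (mul_le_mul_of_nonneg_right hρ (by positivity)).trans hE
    calc (Fintype.card F : ℝ) ^ 3
        = (1 / √(Fintype.card F : ℝ) * (Fintype.card F : ℝ) ^ 2) ^ 2 := by
          rw [mul_pow, div_pow, hss]
          field_simp
      _ ≤ _ := by gcongr
  have key := card_classes_ge h2 E' f ?_ hsize
  · have himg : (((E' ×ˢ E' ×ˢ E').image f : Finset _) : Set (Set _)) =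
        { T | ∃ x ∈ E, ∃ y ∈ E, ∃ z ∈ E, T = f (x, y, z) } := by
      ext T
      simp only [Finset.coe_image, Set.mem_image, Finset.mem_coe, Finset.mem_product, hmem, Prod.exists,
        Set.mem_ofPred_eq]
      constructor
      · rintro ⟨x, y, z, ⟨hx, hy, hz⟩, rfl⟩
        exact ⟨x, hx, y, hy, z, hz, rfl⟩
      · rintro ⟨x, hx, y, hy, z, hz, rfl⟩
        exact ⟨x, y, z, ⟨hx, hy, hz⟩, rfl⟩
    have hn := Set.ncard_coe_finset ((E' ×ˢ E' ×ˢ E').image f)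
    rw [himg] at hn
    change 1 / 3 * ρ * (Fintype.card F : ℝ) ^ 3 ≤
      (Set.ncard { T | ∃ x ∈ E, ∃ y ∈ E, ∃ z ∈ E, T = f (x, y, z) } : ℝ)
    rw [hn]
    refine le_trans ?_ key
    have := mul_le_mul_of_nonneg_left hE hq.le
    linarith
  · intro s _ t ht hst
    simp only [Finset.mem_product, hmem] at ht
    -- `t` lies in its own class, hence in that of `s`.
    have htt : t ∈ f t :=
      ⟨ht.1, ht.2.1, ht.2.2, 0, 1, by simp, by simp, by simp, by simp, by simp⟩
    rw [← hst] at htt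
    obtain ⟨-, -, -, τ, O, hO, hd, e1, e2, e3⟩ := htt
    obtain ⟨r, hr, hact⟩ := exists_rotation O hO hd
    rw [hact] at e1 e2 e3
    exact ⟨r, τ, hr, Prod.ext e1 (Prod.ext e2 e3)⟩
end

section
/- There exist absolute constants C > 0 and c > 0 such that the following holds for every odd prime power q. Let E ⊆ F_q² satisfy |E| ≥ ρ q² for some ρ with C/√q ≤ ρ ≤ 1. Then |{(a,b,c) ∈ F_q³ : T_{a,b,c}(E) ≠ ∅}| ≥ c ρ q³. -/
/-!
Fix `x` and `y` with `‖x - y‖ = a ≠ 0`. The map `z ↦ (‖x - z‖, ‖y - z‖)` is at most two-to-one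
(`card_apex_le_two`), so every nonzero distance `a` realised by a pair of points of `E` contributes
at least `|E| / 2` triples `(a, b, c)`. It remains to see that a positive proportion of all
distances is realised, and this already holds for the distances from one suitable point of `E`.

Let `ν x t` be the number of points of `E` at distance `t` from `x`. Two distinct points `y, z`
have at most `q` points equidistant from both (`card_bisector_le`), which gives the second moment
bound `∑ x, ∑ t, (ν x t - |E| / q)² ≤ |E| q²`, where `x` runs over the whole plane
(`variance_le`). Keeping only `x ∈ E` and averaging, some `x ∈ E` satisfies
`∑ t, (ν x t - |E| / q)² ≤ q²`. Every distance missed by this `x` contributes `(|E| / q)²` to the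
sum, so at most `q⁴ / |E|²` distances are missed, and this is at most `q / 4` when
`|E| ≥ 2 q ^ (3 / 2)`.
-/

open Finset in
/-- The perpendicular bisector of two distinct points has at most `q` points. -/
lemma card_bisector_le {F : Type} [Field F] [Fintype F] [DecidableEq F] (h2 : (2 : F) ≠ 0)
    (y z : Fin 2 → F) (hyz : y ≠ z) :
    #{x : Fin 2 → F | ∑ i, (x i - y i) ^ 2 = ∑ i, (x i - z i) ^ 2} ≤ Fintype.card F := by
  rw [← Finset.card_univ (α := F)]
  -- The bisector is a line, and it projects injectively to one of the two coordinate axes.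
  by_cases h0 : y 0 = z 0
  · have h1 : z 1 - y 1 ≠ 0 := by
      intro h
      apply hyz
      ext i
      fin_cases i
      · exact h0
      · exact (sub_eq_zero.mp h).symm
    refine Finset.card_le_card_of_injOn (fun x => x 0) (fun _ _ => by simp) ?_
    intro u hu v hv huv
    simp only [coe_filter, mem_univ, true_and, Set.mem_ofPred_eq, Fin.sum_univ_two] at hu hv huv
    have : (2 * (z 1 - y 1)) * (u 1 - v 1) = 0 := by
      linear_combination hu - hv - 2 * (z 0 - y 0) * huv
    have := (mul_eq_zero.mp this).resolve_left (mul_ne_zero h2 h1)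
    ext i
    fin_cases i
    · exact huv
    · exact sub_eq_zero.mp this
  · have h1 : z 0 - y 0 ≠ 0 := fun h => h0 (sub_eq_zero.mp h).symm
    refine Finset.card_le_card_of_injOn (fun x => x 1) (fun _ _ => by simp) ?_
    intro u hu v hv huv
    simp only [coe_filter, mem_univ, true_and, Set.mem_ofPred_eq, Fin.sum_univ_two] at hu hv huv
    have : (2 * (z 0 - y 0)) * (u 0 - v 0) = 0 := by
      linear_combination hu - hv - 2 * (z 1 - y 1) * huv
    have := (mul_eq_zero.mp this).resolve_left (mul_ne_zero h2 h1)
    ext i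
    fin_cases i
    · exact sub_eq_zero.mp this
    · exact huv

open Finset in
/-- Two circles whose centres are at nonzero distance meet in at most two points. With
`d = y - x` and `w = z - x`, the dot product `d · w` is determined by the radii, hence so is
`(d × w)² = ‖d‖ ‖w‖ - (d · w)²`, and `w` is recovered from `d · w` and `d × w`. -/
lemma card_apex_le_two {F : Type} [Field F] [DecidableEq F] (h2 : (2 : F) ≠ 0)
    (x y : Fin 2 → F) (hxy : ∑ i, (x i - y i) ^ 2 ≠ 0) (b c : F) (E : Finset (Fin 2 → F)) :
    #{z ∈ E | ∑ i, (x i - z i) ^ 2 = b ∧ ∑ i, (y i - z i) ^ 2 = c} ≤ 2 := by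
  set S := {z ∈ E | ∑ i, (x i - z i) ^ 2 = b ∧ ∑ i, (y i - z i) ^ 2 = c} with hS
  have hmem : ∀ z ∈ S, (x 0 - z 0) ^ 2 + (x 1 - z 1) ^ 2 = b ∧
      (y 0 - z 0) ^ 2 + (y 1 - z 1) ^ 2 = c := by
    intro z hz
    rw [hS, mem_filter, Fin.sum_univ_two, Fin.sum_univ_two] at hz
    exact hz.2
  rw [Fin.sum_univ_two] at hxy
  let f : (Fin 2 → F) → F := fun z => (y 0 - x 0) * (z 1 - x 1) - (y 1 - x 1) * (z 0 - x 0)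
  have hdot : ∀ u ∈ S, ∀ v ∈ S,
      (y 0 - x 0) * (u 0 - v 0) + (y 1 - x 1) * (u 1 - v 1) = 0 := by
    intro u hu v hv
    obtain ⟨hu1, hu2⟩ := hmem u hu
    obtain ⟨hv1, hv2⟩ := hmem v hv
    refine (mul_eq_zero.mp ?_).resolve_left h2
    linear_combination hu1 - hu2 - hv1 + hv2
  have hinj : Set.InjOn f S := by
    intro u hu v hv huv
    have hd := hdot u hu v hv
    simp only [f] at huv
    ext i
    fin_cases i
    · refine sub_eq_zero.mp ((mul_eq_zero.mp ?_).resolve_left hxy)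
      simp only [Fin.zero_eta]
      linear_combination (y 0 - x 0) * hd - (y 1 - x 1) * huv
    · refine sub_eq_zero.mp ((mul_eq_zero.mp ?_).resolve_left hxy)
      simp only [Fin.mk_one]
      linear_combination (y 1 - x 1) * hd + (y 0 - x 0) * huv
  rcases S.eq_empty_or_nonempty with h | ⟨w, hw⟩
  · simp [h]
  · have hmaps : Set.MapsTo f S ({f w, - f w} : Finset F) := by
      intro u hu
      have hd := hdot u hu w hw
      obtain ⟨hu1, _⟩ := hmem u hu
      obtain ⟨hw1, _⟩ := hmem w hw
      have : (f u - f w) * (f u + f w) = 0 := by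
        simp only [f]
        linear_combination ((x 0 - y 0) ^ 2 + (x 1 - y 1) ^ 2) * (hu1 - hw1) -
          ((y 0 - x 0) * (u 0 - x 0) + (y 1 - x 1) * (u 1 - x 1) +
            (y 0 - x 0) * (w 0 - x 0) + (y 1 - x 1) * (w 1 - x 1)) * hd
      simp only [coe_insert, coe_singleton, Set.mem_insert_iff, Set.mem_singleton_iff]
      rcases mul_eq_zero.mp this with h | h
      · exact Or.inl (sub_eq_zero.mp h)
      · exact Or.inr (eq_neg_of_add_eq_zero_left h)
    exact (Finset.card_le_card_of_injOn f hmaps hinj).trans Finset.card_le_two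

open Finset in
/-- Second moment bound for the number of points of `E` on a circle, averaged over all centres
and radii. -/
lemma variance_le {F : Type} [Field F] [Fintype F] [DecidableEq F] (h2 : (2 : F) ≠ 0)
    (E : Finset (Fin 2 → F)) :
    ∑ x : Fin 2 → F, ∑ t : F,
      ((#{y ∈ E | ∑ i, (x i - y i) ^ 2 = t} : ℝ) - #E / Fintype.card F) ^ 2 ≤
      #E * (Fintype.card F : ℝ) ^ 2 := by
  set q : ℝ := (Fintype.card F : ℝ) with hq
  have hq0 : 0 < q := by rw [hq]; exact_mod_cast Fintype.card_pos
  set D : (Fin 2 → F) → (Fin 2 → F) → F := fun x y => ∑ i, (x i - y i) ^ 2 with hD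
  have hfirst : ∀ x, ∑ t : F, (#{y ∈ E | D x y = t} : ℝ) = #E := by
    intro x
    rw [Finset.card_eq_sum_card_fiberwise (f := D x) (t := univ) (fun _ _ => by simp)]
    push_cast
    rfl
  have hsecond : ∀ x, ∑ t : F, (#{y ∈ E | D x y = t} : ℝ) ^ 2 =
      ∑ y ∈ E, ∑ z ∈ E, if D x y = D x z then (1 : ℝ) else 0 := by
    intro x
    have : ∀ t, (#{y ∈ E | D x y = t} : ℝ) ^ 2 =
        ∑ y ∈ E, ∑ z ∈ E, if D x y = t then (if D x z = t then (1 : ℝ) else 0) else 0 := by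
      intro t
      rw [sq, Finset.card_filter]
      push_cast
      rw [Finset.sum_mul_sum]
      refine sum_congr rfl fun y _ => sum_congr rfl fun z _ => ?_
      split_ifs <;> simp
    simp_rw [this]
    rw [sum_comm]
    refine sum_congr rfl fun y _ => ?_
    rw [sum_comm]
    refine sum_congr rfl fun z _ => ?_
    simp [eq_comm]
  have hcardV : (Fintype.card (Fin 2 → F) : ℝ) = q ^ 2 := by simp [hq]
  have htotal : ∑ x, ∑ t : F, (#{y ∈ E | D x y = t} : ℝ) ^ 2 ≤
      (#E : ℝ) ^ 2 * q + #E * q ^ 2 := by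
    simp_rw [hsecond]
    rw [sum_comm]
    calc ∑ y ∈ E, ∑ x, ∑ z ∈ E, (if D x y = D x z then (1 : ℝ) else 0)
        = ∑ y ∈ E, ∑ z ∈ E, (#{x | D x y = D x z} : ℝ) := by
          refine sum_congr rfl fun y _ => ?_
          rw [sum_comm]
          refine sum_congr rfl fun z _ => ?_
          simp
      _ ≤ ∑ y ∈ E, ∑ z ∈ E, (q + if y = z then q ^ 2 else 0) := by
          refine sum_le_sum fun y _ => sum_le_sum fun z _ => ?_
          by_cases h : y = z
          · subst h
            simp only [if_true, filter_true, card_univ, hcardV]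
            linarith
          · simp only [h, if_false, add_zero]
            rw [hq]
            exact_mod_cast card_bisector_le h2 y z h
      _ = (#E : ℝ) ^ 2 * q + #E * q ^ 2 := by
          simp only [sum_add_distrib, sum_const, sum_ite_eq, nsmul_eq_mul]
          rw [sum_ite_of_true (fun _ h => h)]
          simp only [sum_const, nsmul_eq_mul]
          ring
  have hexp : ∀ x, ∑ t : F, ((#{y ∈ E | D x y = t} : ℝ) - #E / q) ^ 2 =
      ∑ t : F, (#{y ∈ E | D x y = t} : ℝ) ^ 2 - (#E : ℝ) ^ 2 / q := by
    intro x
    simp_rw [sub_sq, sum_add_distrib, sum_sub_distrib, ← sum_mul, ← mul_sum, hfirst]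
    simp only [sum_const, card_univ, nsmul_eq_mul, ← hq]
    field_simp
    ring
  calc _ = ∑ x, (∑ t : F, (#{y ∈ E | D x y = t} : ℝ) ^ 2 - (#E : ℝ) ^ 2 / q) :=
        sum_congr rfl fun x _ => hexp x
    _ = ∑ x, ∑ t : F, (#{y ∈ E | D x y = t} : ℝ) ^ 2 - (#E : ℝ) ^ 2 * q := by
        rw [sum_sub_distrib, sum_const, card_univ, nsmul_eq_mul, hcardV]
        field_simp
    _ ≤ _ := by linarith

open Finset in
/-- A set `E` with `|E|² ≥ 4 q³` contains a point from which at least `5 q / 12` nonzero distances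
to points of `E` are realised. -/
lemma exists_many_pinned_distances {F : Type} [Field F] [Fintype F] [DecidableEq F]
    (h2 : (2 : F) ≠ 0) (hq3 : 3 ≤ Fintype.card F) (E : Finset (Fin 2 → F))
    (hE : 4 * (Fintype.card F : ℝ) ^ 3 ≤ (#E : ℝ) ^ 2) :
    ∃ x ∈ E, 5 / 12 * (Fintype.card F : ℝ) ≤
      #{t : F | t ≠ 0 ∧ ∃ y ∈ E, ∑ i, (x i - y i) ^ 2 = t} := by
  have hvar := variance_le h2 E
  set q : ℝ := (Fintype.card F : ℝ) with hq
  have hq3' : (3 : ℝ) ≤ q := by rw [hq]; exact_mod_cast hq3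
  have hne : E.Nonempty := by
    rw [nonempty_iff_ne_empty]
    rintro rfl
    have : 0 < q ^ 3 := by positivity
    simp at hE
    linarith
  obtain ⟨x, hx, hxle⟩ : ∃ x ∈ E, ∑ t : F,
      ((#{y ∈ E | ∑ i, (x i - y i) ^ 2 = t} : ℝ) - #E / q) ^ 2 ≤ q ^ 2 := by
    refine Finset.exists_le_of_sum_le hne ?_
    rw [sum_const, nsmul_eq_mul]
    refine le_trans ?_ hvar
    exact sum_le_sum_of_subset_of_nonneg (subset_univ _)
      fun _ _ _ => sum_nonneg fun _ _ => sq_nonneg _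
  refine ⟨x, hx, ?_⟩
  set A : Finset F := {t : F | t ≠ 0 ∧ ∃ y ∈ E, ∑ i, (x i - y i) ^ 2 = t} with hA
  set Z : Finset F := {t : F | ¬ ∃ y ∈ E, ∑ i, (x i - y i) ^ 2 = t} with hZ
  have hcover : (univ : Finset F) ⊆ (A ∪ Z) ∪ {0} := by
    intro t _
    simp only [hA, hZ, mem_union, mem_filter, mem_univ, true_and, mem_singleton]
    by_cases h0 : t = 0
    · exact Or.inr h0
    · by_cases hy : ∃ y ∈ E, ∑ i, (x i - y i) ^ 2 = t
      · exact Or.inl (Or.inl ⟨h0, hy⟩)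
      · exact Or.inl (Or.inr hy)
  have hcard : q ≤ #A + #Z + 1 := by
    have h1 := (card_le_card hcover).trans (card_union_le _ _)
    have h3 := card_union_le A Z
    rw [card_univ, card_singleton] at h1
    rw [hq]
    exact_mod_cast h1.trans (by omega)
  have hmiss : #Z * (#E / q) ^ 2 ≤ q ^ 2 := by
    refine le_trans ?_ hxle
    rw [← nsmul_eq_mul, ← sum_const]
    refine le_trans (le_of_eq (sum_congr rfl fun t ht => ?_))
      (sum_le_sum_of_subset_of_nonneg (subset_univ Z) fun _ _ _ => sq_nonneg _)
    have : #{y ∈ E | ∑ i, (x i - y i) ^ 2 = t} = 0 := by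
      rw [card_eq_zero, filter_eq_empty_iff]
      intro y hy hyt
      rw [hZ, mem_filter] at ht
      exact ht.2 ⟨y, hy, hyt⟩
    rw [this]
    push_cast
    ring
  have hZle : (#Z : ℝ) ≤ q / 4 := by
    have h4 : 4 * q ≤ (#E / q : ℝ) ^ 2 := by
      rw [div_pow, le_div_iff₀ (by positivity)]
      linarith
    have h5 : (#Z : ℝ) * (4 * q) ≤ q ^ 2 :=
      (mul_le_mul_of_nonneg_left h4 (by positivity)).trans hmiss
    have : (#Z * 4 - q) * q ≤ 0 := by linarith
    have := nonpos_of_mul_nonpos_left this (by linarith)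
    linarith
  linarith

/-- If `E ⊆ 𝔽_q²` has `|E| ≥ ρ q²` with `C/√q ≤ ρ ≤ 1`, then the number of
triples `(a,b,c) ∈ 𝔽_q³` for which `T_{a,b,c}(E) ≠ ∅` is at least `c ρ q³`. -/
theorem stmt_1 :
    ∃ C > (0 : ℝ), ∃ c > (0 : ℝ),
      ∀ (F : Type) [Field F] [Fintype F],
        Odd (Fintype.card F) →
        ∀ (E : Set (Fin 2 → F)) (ρ : ℝ),
          C / Real.sqrt (Fintype.card F) ≤ ρ → ρ ≤ 1 →
          ρ * (Fintype.card F : ℝ) ^ 2 ≤ (E.ncard : ℝ) →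
          c * ρ * (Fintype.card F : ℝ) ^ 3 ≤
            (Set.ncard { abc : F × F × F |
              ∃ x ∈ E, ∃ y ∈ E, ∃ z ∈ E,
                (∑ i, (x i - y i) ^ 2) = abc.1 ∧
                (∑ i, (x i - z i) ^ 2) = abc.2.1 ∧
                (∑ i, (y i - z i) ^ 2) = abc.2.2 } : ℝ) := by
  classical
  refine ⟨2, by norm_num, 5 / 24, by norm_num, ?_⟩
  intro F _ _ hodd E₀ ρ hρ _ hE
  obtain ⟨E, rfl⟩ : ∃ E : Finset (Fin 2 → F), (E : Set (Fin 2 → F)) = E₀ :=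
    ⟨E₀.toFinset, by simp⟩
  rw [Set.ncard_coe_finset] at hE
  have h2 : (2 : F) ≠ 0 := by
    apply Ring.two_ne_zero
    intro h
    have := FiniteField.even_card_of_char_two h
    rw [Nat.odd_iff] at hodd
    omega
  have hq3 : 3 ≤ Fintype.card F := by
    have := Fintype.one_lt_card (α := F)
    obtain ⟨k, hk⟩ := hodd
    omega
  set q : ℝ := (Fintype.card F : ℝ) with hq
  have hq0 : 0 < q := by rw [hq]; exact_mod_cast Fintype.card_pos
  have hbig : 4 * q ^ 3 ≤ (E.card : ℝ) ^ 2 := by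
    have h1 : 2 / Real.sqrt q * q ^ 2 ≤ E.card :=
      (mul_le_mul_of_nonneg_right hρ (by positivity)).trans hE
    have h3 := pow_le_pow_left₀ (by positivity) h1 2
    rw [mul_pow, div_pow, Real.sq_sqrt hq0.le] at h3
    refine le_trans (le_of_eq ?_) h3
    field_simp
    norm_num
  obtain ⟨x, hx, hA⟩ := exists_many_pinned_distances h2 hq3 E hbig
  set A : Finset F :=
    Finset.univ.filter fun t => t ≠ 0 ∧ ∃ y ∈ E, ∑ i, (x i - y i) ^ 2 = t with hAdef
  have hAmem : ∀ t ∈ A, t ≠ 0 ∧ ∃ y ∈ E, ∑ i, (x i - y i) ^ 2 = t := by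
    intro t ht
    simpa [hAdef] using ht
  choose! hA0 Y hYE hYd using hAmem
  let f : F × (Fin 2 → F) → F × F × F :=
    fun p => (p.1, ∑ i, (x i - p.2 i) ^ 2, ∑ i, (Y p.1 i - p.2 i) ^ 2)
  have hfib := Finset.card_le_mul_card_image (f := f) (A ×ˢ E) 2 (by
    rintro ⟨a, b, c⟩ h
    obtain ⟨p, hp, hpf⟩ := Finset.mem_image.mp h
    have ha : a ∈ A := by
      have : p.1 = a := congrArg Prod.fst hpf
      exact this ▸ (Finset.mem_product.mp hp).1
    refine le_trans ?_
      (card_apex_le_two h2 x (Y a) (by rw [hYd a ha]; exact hA0 a ha) b c E)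
    refine Finset.card_le_card_of_injOn Prod.snd ?_ ?_
    · rintro ⟨t, z⟩ hz
      simp only [f, Finset.coe_filter, Finset.mem_product, Set.mem_ofPred_eq, Prod.mk.injEq] at hz ⊢
      obtain ⟨⟨_, hzE⟩, rfl, hb, hc⟩ := hz
      exact ⟨hzE, hb, hc⟩
    · rintro ⟨t, z⟩ hz ⟨t', z'⟩ hz' hzz
      simp only [f, Finset.coe_filter, Set.mem_ofPred_eq, Prod.mk.injEq] at hz hz'
      exact Prod.ext (hz.2.1.trans hz'.2.1.symm) hzz)
  have hsub : (((A ×ˢ E).image f : Finset (F × F × F)) : Set (F × F × F)) ⊆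
      { abc : F × F × F |
              ∃ x ∈ (E : Set (Fin 2 → F)), ∃ y ∈ (E : Set (Fin 2 → F)),
                ∃ z ∈ (E : Set (Fin 2 → F)),
                (∑ i, (x i - y i) ^ 2) = abc.1 ∧
                (∑ i, (x i - z i) ^ 2) = abc.2.1 ∧
                (∑ i, (y i - z i) ^ 2) = abc.2.2 } := by
    intro s hs
    obtain ⟨⟨t, z⟩, hp, rfl⟩ := Finset.mem_image.mp (Finset.mem_coe.mp hs)
    obtain ⟨ht, hz⟩ := Finset.mem_product.mp hp
    exact ⟨x, hx, Y t, hYE t ht, z, hz, hYd t ht, rfl, rfl⟩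
  have hle := Set.ncard_le_ncard hsub (Set.toFinite _)
  rw [Set.ncard_coe_finset] at hle
  rw [Finset.card_product] at hfib
  have hfinal : (A.card : ℝ) * E.card ≤ 2 * (Set.ncard { abc : F × F × F |
              ∃ x ∈ (E : Set (Fin 2 → F)), ∃ y ∈ (E : Set (Fin 2 → F)),
                ∃ z ∈ (E : Set (Fin 2 → F)),
                (∑ i, (x i - y i) ^ 2) = abc.1 ∧
                (∑ i, (x i - z i) ^ 2) = abc.2.1 ∧
                (∑ i, (y i - z i) ^ 2) = abc.2.2 } : ℝ) := by
    exact_mod_cast hfib.trans (Nat.mul_le_mul_left 2 hle)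
  have hmul : 5 / 12 * q * (ρ * q ^ 2) ≤ A.card * E.card :=
    (mul_le_mul_of_nonneg_left hE (by positivity)).trans
      (mul_le_mul_of_nonneg_right hA (by positivity))
  linarith
end

section
/- Let q be an odd prime power and let V₀, V₁, …, V_d and V′₀, V′₁, …, V′_d be points of F_q^d such that V₁−V₀, …, V_d−V₀ form a basis of F_q^d and V′₁−V′₀, …, V′_d−V′₀ form a basis of F_q^d. Suppose that ‖V_i − V_j‖ = ‖V′_i − V′_j‖ for all 0 ≤ i, j ≤ d. Then there exist τ ∈ F_q^d and a matrix O with OᵀO = I such that V′_i = O(V_i) + τ for all 0 ≤ i ≤ d. -/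
/-!
Put the edge vectors `V i.succ - V 0` in the rows of a matrix `M`, and likewise `M'` for `V'`.
By polarization, which needs `2 ≠ 0`, the distances determine the Gram matrices, so
`M * Mᵀ = M' * M'ᵀ`. As `M` is invertible, `O = (M⁻¹ * M')ᵀ` is the linear map sending each edge
of the first simplex to the corresponding edge of the second, and equality of the Gram matrices
says exactly that it is orthogonal. The translation is then fixed by the vertex `V 0`.
-/

open Matrix

/-- Polarization at the base point `c`: dot products of differences from `c` are determined by
the three squared distances. -/
lemma two_mul_dotProduct_sub {F : Type*} [CommRing F] {d : ℕ} (a b c : Fin d → F) :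
    2 * ((a - c) ⬝ᵥ (b - c)) =
      (∑ r, (a r - c r) ^ 2) + (∑ r, (b r - c r) ^ 2) - ∑ r, (a r - b r) ^ 2 := by
  simp only [dotProduct, Pi.sub_apply]
  rw [Finset.mul_sum, ← Finset.sum_add_distrib, ← Finset.sum_sub_distrib]
  exact Finset.sum_congr rfl fun r _ => by ring

/-- Two nondegenerate simplices in `𝔽_q^d` with pairwise equal "distances"
`‖V_i − V_j‖` are related by an orthogonal transformation and a translation. -/
theorem stmt_3 (F : Type) [Field F] [Fintype F] (hodd : Odd (Fintype.card F))
    (d : ℕ) (V V' : Fin (d + 1) → (Fin d → F))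
    (hV₁ : LinearIndependent F (fun i : Fin d => V i.succ - V 0))
    (hV₂ : Submodule.span F (Set.range (fun i : Fin d => V i.succ - V 0)) = ⊤)
    (hV'₁ : LinearIndependent F (fun i : Fin d => V' i.succ - V' 0))
    (hV'₂ : Submodule.span F (Set.range (fun i : Fin d => V' i.succ - V' 0)) = ⊤)
    (h : ∀ i j, (∑ r, (V i r - V j r) ^ 2) = ∑ r, (V' i r - V' j r) ^ 2) :
    ∃ τ : Fin d → F, ∃ O : Matrix (Fin d) (Fin d) F,
      Oᵀ * O = 1 ∧ ∀ i, V' i = O.mulVec (V i) + τ := by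
  have h2 : (2 : F) ≠ 0 := by
    apply Ring.two_ne_zero
    intro hc
    have h0 := FiniteField.even_card_iff_char_two.mp hc
    have h1 := Nat.odd_iff.mp hodd
    omega
  let M : Matrix (Fin d) (Fin d) F := of fun i => V i.succ - V 0
  let M' : Matrix (Fin d) (Fin d) F := of fun i => V' i.succ - V' 0
  have hM : IsUnit M := linearIndependent_rows_iff_isUnit.mp hV₁
  have hdet : IsUnit M.det := (isUnit_iff_isUnit_det M).mp hM
  have hdetT : IsUnit Mᵀ.det := by rwa [det_transpose]
  have hG : M * Mᵀ = M' * M'ᵀ := by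
    ext i j
    apply mul_left_cancel₀ h2
    change 2 * ((V i.succ - V 0) ⬝ᵥ (V j.succ - V 0)) =
      2 * ((V' i.succ - V' 0) ⬝ᵥ (V' j.succ - V' 0))
    simp only [two_mul_dotProduct_sub, h]
  let O : Matrix (Fin d) (Fin d) F := (M⁻¹ * M')ᵀ
  have hedge : ∀ i : Fin d, O *ᵥ (V i.succ - V 0) = V' i.succ - V' 0 := by
    intro i
    have hMO : M * (M⁻¹ * M') = M' := mul_nonsing_inv_cancel_left M M' hdet
    have hrow : (M * (M⁻¹ * M')) i = M' i := by rw [hMO]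
    rw [mul_apply_eq_vecMul] at hrow
    rw [mulVec_transpose]
    exact hrow
  refine ⟨V' 0 - O *ᵥ V 0, O, ?_, ?_⟩
  · calc Oᵀ * O = M⁻¹ * (M' * M'ᵀ) * (Mᵀ)⁻¹ := by
          simp only [O, transpose_transpose, transpose_mul, transpose_nonsing_inv, Matrix.mul_assoc]
      _ = 1 := by
          rw [← hG, nonsing_inv_mul_cancel_left M Mᵀ hdet, mul_nonsing_inv Mᵀ hdetT]
  · intro i
    refine Fin.cases ?_ (fun i => ?_) i
    · abel
    · have hi := hedge i
      rw [mulVec_sub] at hi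
      rw [eq_add_of_sub_eq hi.symm]
      abel
end

section
/- Let q be an odd prime power, let a, b ∈ F_q with a ≠ 0 and b ≠ 0, and let x, w ∈ F_q² with ‖x − w‖ = a. Then the number of c ∈ F_q with c ≠ 0 for which the set {z ∈ F_q² : ‖x − z‖ = b and ‖w − z‖ = c} is nonempty is at least (q − 3)/2. -/
/-!
Put `v = w - x`, so `‖v‖ = a`, and write `z = x + (s v + t v⊥) / a`. Then `‖x - z‖ = (s² + t²) / a`
and `‖w - z‖ = a + b - 2 s` whenever `s² + t² = a b`. Every element of a finite field is a sum of
two squares, so the conic `s² + t² = a b` has a point, and rotating that point by the rational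
parametrisation of the unit circle gives a point for each `m` with `1 + m² ≠ 0`, hence for at least
`q - 2` values of `m`. A given `s` arises from at most two values of `m` (they are the roots of a
nonzero quadratic), so the number `N` of values of `a + b - 2 s` satisfies `2 N ≥ q - 2`. As `q` is
odd, `2 N ≥ q - 1`, and discarding the value `0` leaves at least `(q - 3) / 2`.
-/

/-- The coefficients need not include a nonzero `A`: a set of zeros of any polynomial of degree at
most two that is not identically zero has at most two elements. -/
theorem card_quadratic_zeros_le {F : Type} [Field F] (S : Finset F) (A B D : F)
    (h : A ≠ 0 ∨ B ≠ 0 ∨ D ≠ 0) (hS : ∀ m ∈ S, A * m ^ 2 + B * m + D = 0) : S.card ≤ 2 := by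
  classical
  open Polynomial in
  have hp : (C A * X ^ 2 + C B * X + C D : F[X]) ≠ 0 := by
    intro h0
    have h2 := congrArg (fun p : F[X] => p.coeff 2) h0
    have h1 := congrArg (fun p : F[X] => p.coeff 1) h0
    have h00 := congrArg (fun p : F[X] => p.coeff 0) h0
    simp [coeff_X, coeff_C] at h2 h1 h00
    tauto
  open Polynomial in
  calc S.card ≤ (C A * X ^ 2 + C B * X + C D : F[X]).roots.toFinset.card := by
        apply Finset.card_le_card
        intro m hm
        rw [Multiset.mem_toFinset, mem_roots hp]
        simpa using hS m hm
    _ ≤ (C A * X ^ 2 + C B * X + C D : F[X]).roots.card := Multiset.toFinset_card_le _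
    _ ≤ (C A * X ^ 2 + C B * X + C D : F[X]).natDegree := card_roots' _
    _ ≤ 2 := natDegree_quadratic_le

theorem two_ne_zero_of_odd_card {F : Type} [Field F] [Fintype F]
    (hodd : Odd (Fintype.card F)) : (2 : F) ≠ 0 := by
  intro h
  have h1 : (Fintype.card F : F) = 0 := FiniteField.cast_card_eq_zero F
  obtain ⟨k, hk⟩ := hodd
  rw [hk] at h1
  push_cast at h1
  rw [h] at h1
  simp at h1

theorem stmt_4 (F : Type) [Field F] [Fintype F] (hodd : Odd (Fintype.card F))
    (a b : F) (ha : a ≠ 0) (hb : b ≠ 0) (x w : Fin 2 → F)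
    (hxw : (∑ i, (x i - w i) ^ 2) = a) :
    ((Fintype.card F : ℝ) - 3) / 2 ≤
      (Set.ncard { c : F | c ≠ 0 ∧ ∃ z : Fin 2 → F,
        (∑ i, (x i - z i) ^ 2) = b ∧ (∑ i, (w i - z i) ^ 2) = c } : ℝ) := by
  classical
  have h2 := two_ne_zero_of_odd_card hodd
  obtain ⟨s₀, t₀, hst⟩ : ∃ s t : F, s ^ 2 + t ^ 2 = a * b := by
    open Polynomial in
    obtain ⟨s, t, h⟩ := FiniteField.exists_root_sum_quadratic (f := (X ^ 2 : F[X]))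
      (g := X ^ 2 - C (a * b)) (degree_X_pow 2) (degree_X_pow_sub_C (by decide) _)
      (Nat.odd_iff.1 hodd)
    refine ⟨s, t, ?_⟩
    simp only [Polynomial.eval_pow, Polynomial.eval_X, Polynomial.eval_sub,
      Polynomial.eval_C] at h
    linear_combination h
  have hab : a * b ≠ 0 := mul_ne_zero ha hb
  set M : Finset F := Finset.univ.filter fun m => 1 + m ^ 2 ≠ 0 with hM
  have hMcard : Fintype.card F ≤ M.card + 2 := by
    have h := Finset.card_add_card_compl M
    have h' := card_quadratic_zeros_le Mᶜ 1 0 1 (by simp)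
      (by intro m hm; simp [hM] at hm; linear_combination hm)
    omega
  -- first coordinate of `(s₀, t₀)` rotated by `((1 - m²) / (1 + m²), 2 m / (1 + m²))`
  set σ : F → F := fun m => (s₀ * (1 - m ^ 2) - 2 * m * t₀) / (1 + m ^ 2) with hσ
  set f : F → F := fun m => a + b - 2 * σ m with hf
  have hfib : M.card ≤ 2 * (M.image f).card := by
    refine Finset.card_le_mul_card_image M 2 fun c hc => ?_
    obtain ⟨m₀, -, rfl⟩ := Finset.mem_image.1 hc
    refine card_quadratic_zeros_le _ (σ m₀ + s₀) (2 * t₀) (σ m₀ - s₀) ?_ ?_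
    · by_contra! hcon
      obtain ⟨h1, h3, h4⟩ := hcon
      have ht : t₀ = 0 := by simpa [h2] using h3
      have hs : s₀ = 0 := by
        have : 2 * s₀ = 0 := by linear_combination h1 - h4
        simpa [h2] using this
      apply hab
      rw [← hst, ht, hs]
      ring
    · intro m hm
      obtain ⟨hm, he⟩ := Finset.mem_filter.1 hm
      have hm' : 1 + m ^ 2 ≠ 0 := (Finset.mem_filter.1 hm).2
      have hs : σ m = σ m₀ := mul_left_cancel₀ h2 (by linear_combination -he)
      have hd : σ m * (1 + m ^ 2) = s₀ * (1 - m ^ 2) - 2 * m * t₀ := div_mul_cancel₀ _ hm'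
      rw [hs] at hd
      linear_combination hd
  have hsub : (((M.image f).erase 0 : Finset F) : Set F) ⊆ { c : F | c ≠ 0 ∧ ∃ z : Fin 2 → F,
        (∑ i, (x i - z i) ^ 2) = b ∧ (∑ i, (w i - z i) ^ 2) = c } := by
    intro c hc
    rw [Finset.mem_coe, Finset.mem_erase] at hc
    obtain ⟨hc0, hc⟩ := hc
    refine ⟨hc0, ?_⟩
    obtain ⟨m, hm, rfl⟩ := Finset.mem_image.1 hc
    have hm' : 1 + m ^ 2 ≠ 0 := (Finset.mem_filter.1 hm).2
    obtain ⟨t, ht⟩ : ∃ t, σ m ^ 2 + t ^ 2 = a * b := by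
      refine ⟨(t₀ * (1 - m ^ 2) + 2 * m * s₀) / (1 + m ^ 2), ?_⟩
      rw [← hst, hσ]
      field_simp
      ring
    simp only [Fin.sum_univ_two] at hxw ⊢
    refine ⟨![x 0 + (σ m * (w 0 - x 0) - t * (w 1 - x 1)) / a,
      x 1 + (σ m * (w 1 - x 1) + t * (w 0 - x 0)) / a], ?_, ?_⟩
    · simp only [Matrix.cons_val_zero, Matrix.cons_val_one]
      field_simp
      linear_combination (σ m ^ 2 + t ^ 2) * hxw + a * ht
    · simp only [Matrix.cons_val_zero, Matrix.cons_val_one, hf]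
      field_simp
      linear_combination (σ m ^ 2 + t ^ 2 - 2 * a * σ m + a ^ 2) * hxw + a * ht
  have hle := Set.ncard_le_ncard hsub (Set.toFinite _)
  rw [Set.ncard_coe_finset] at hle
  have her := Finset.pred_card_le_card_erase (s := M.image f) (a := (0 : F))
  obtain ⟨k, hk⟩ := hodd
  -- `q` odd improves `q - 2 ≤ 2 N` to `q - 1 ≤ 2 N`, which pays for discarding `c = 0`
  have hfin : Fintype.card F ≤ 2 * Set.ncard { c : F | c ≠ 0 ∧ ∃ z : Fin 2 → F,
        (∑ i, (x i - z i) ^ 2) = b ∧ (∑ i, (w i - z i) ^ 2) = c } + 3 := by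
    omega
  have hfin' : (Fintype.card F : ℝ) ≤ 2 * (Set.ncard { c : F | c ≠ 0 ∧ ∃ z : Fin 2 → F,
        (∑ i, (x i - z i) ^ 2) = b ∧ (∑ i, (w i - z i) ^ 2) = c } : ℝ) + 3 := by
    exact_mod_cast hfin
  linarith
end

section
/- There is an absolute constant C > 0 such that for every odd prime power q, every d ≥ 2, every E ⊆ F_q^d, and every t ∈ F_q with t ≠ 0, one has | |{(x,y) ∈ E × E : ‖x−y‖ = t}| − |E|² q^{−1} | ≤ C q^{(d−1)/2} |E|. -/
/-!
Write `χ` for the quadratic character of `F`, `q` for its size and `p` for its characteristic, and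
fix a nontrivial additive character `ψ` with `ψ(x ^ p) = ψ x`. The constant obtained is `C = 2`.

**Reduction to complete sums.** By orthogonality, `q` times the number of pairs at distance `t` is
`∑_s ∑_{x, y ∈ E} ψ(s (‖x - y‖ - t))`, and `s = 0` gives the main term `|E|²`. For `s ≠ 0`, completing
the square expands `ψ(s ‖z‖)` over the characters `z ↦ ψ(m · z)`, with coefficients
`χ(s)^d ψ(-‖m‖ / 4s)` up to the `d`-th power of a Gauss sum, of absolute value `q^{d/2}`
(`gaussian_fourier_pi`). Summing over `s` leaves, for each `m`, a sum of the form
`∑_{x ≠ 0} χ(x)^d ψ(x + a / x)`; if it is at most `2 √q` in absolute value (`norm_twisted_le`), then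
Parseval (`parseval`) bounds the error by `2 q^{(d-1)/2} |E|`.

**Salié sums.** For odd `d` the sum is elementary: it is zero or a Gauss sum times two values of `ψ`
(`norm_salie_le`).

**Kloosterman sums.** For even `d` the estimate is Weil's bound `|K| ≤ 2 √q`. Over the quadratic
extension of `F` the Kloosterman sum becomes `2q - K²` (`kloosterman_quadraticAlgebra`), so that the
normalised sum `s = K / √q` evolves by `s ↦ 2 - s²` along a tower of quadratic extensions. If
`|s| > 2`, the iterates tend to `-∞`, whereas the iterates for the other powers of `ψ` never exceed `2`.
But the Kloosterman sums of all nontrivial powers of `ψ` add up to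
`1 + ∑_y χ((y^p - y)² - 4a)` (`sum_kloosterman_pow`), and Stepanov's polynomial method
(`card_isSquare_le`) shows that this is at least `-O(√q)` with a constant depending on `p` only
(`neg_le_sum_quadraticChar_artinSchreier`). Hence `|s| ≤ 2` (`abs_normKloosterman_le`).
-/

section

open Finset Polynomial

/-! ### Stepanov's method for quadratic characters -/

theorem coeff_mul_natDegree_le {F : Type*} [Field F] {P Q : F[X][X]} {a b : ℕ}
    (hP : ∀ i, (P.coeff i).natDegree ≤ a) (hQ : ∀ i, (Q.coeff i).natDegree ≤ b) (i : ℕ) :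
    ((P * Q).coeff i).natDegree ≤ a + b := by
  rw [coeff_mul]
  refine natDegree_sum_le_of_forall_le _ _ fun x _ => ?_
  exact natDegree_mul_le.trans (add_le_add (hP _) (hQ _))

/-- A polynomial in `X` and `Y` whose degree in `X` is less than `R` is determined by its
specialisation `Y = X ^ R`: expansion in base `X ^ R` is unique. -/
theorem eq_zero_of_eval_X_pow {F : Type*} [Field F] {R : ℕ} (n : ℕ) :
    ∀ P : F[X][X], P.natDegree < n → (∀ i, (P.coeff i).natDegree < R) →
      P.eval (X ^ R) = 0 → P = 0 := by
  induction n with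
  | zero => intro P h; omega
  | succ n ih =>
    intro P hn hc h0
    have h1 := divX_mul_X_add P
    have h2 : P.divX.eval (X ^ R) * X ^ R + P.coeff 0 = 0 := by
      rw [← h0]; conv_rhs => rw [← h1]
      simp
    have h3 : P.coeff 0 = 0 := by
      apply eq_zero_of_dvd_of_natDegree_lt (p := X ^ R)
      · rw [eq_neg_of_add_eq_zero_right h2]
        exact (dvd_mul_left _ _).neg_right
      · rw [natDegree_X_pow]; exact hc 0
    rw [h3, add_zero] at h2
    have h4 : P.divX.eval (X ^ R) = 0 := by
      rcases mul_eq_zero.1 h2 with h | h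
      · exact h
      · exact absurd h (pow_ne_zero _ X_ne_zero)
    by_cases hd : P.natDegree = 0
    · rw [eq_C_of_natDegree_eq_zero hd, h3, C_0]
    have h5 : P.divX = 0 := by
      apply ih _ _ _ h4
      · rw [natDegree_divX_eq_natDegree_tsub_one]; omega
      · intro i; rw [coeff_divX]; exact hc _
    rw [← h1, h5, h3]; simp

/-- The functions `1` and `H ^ ((R + 1) / 2)`, with `R = 2 * r + 1`, are linearly independent
over combinations of powers of `X ^ R` with coefficients of small degree: otherwise `H` would be
a square up to a constant. -/
theorem stepanov_independent {F : Type*} [Field F] {p k r d : ℕ} [Fact p.Prime] [CharP F p]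
    (hR : p ^ k = 2 * r + 1) {H : F[X]} (hsq : Squarefree H) (hdeg : H.natDegree = 2 * d)
    (hd : 0 < d) (hdr : d < r)
    (U V : F[X][X]) (hU : ∀ i, (U.coeff i).natDegree ≤ r - 1)
    (hV : ∀ i, (V.coeff i).natDegree ≤ r - d - 1)
    (h : U.eval (X ^ (p ^ k)) + V.eval (X ^ (p ^ k)) * H ^ (r + 1) = 0) : U = 0 ∧ V = 0 := by
  set R := p ^ k with hRdef
  have hH0 : H ≠ 0 := by rintro rfl; simp at hdeg; omega
  set Hs : F[X] := H.map (iterateFrobenius F p k) with hHs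
  have hHs0 : Hs ≠ 0 := by
    rw [hHs, Ne, Polynomial.map_eq_zero]; exact hH0
  have hpow : H ^ R = (Hs.map C).eval (X ^ R) := by
    have h1 := map_iterateFrobenius_expand p H k
    rw [← h1, map_expand, eval_map]; rfl
  -- Squaring `U = -V H ^ (r + 1)` at `Y = X ^ R` gives `U ^ 2 = V ^ 2 * H * H ^ R`, and `H ^ R` is a
  -- polynomial in `X ^ R`; all degrees in `X` are below `R`, so the identity lifts to `F[X][Y]`.
  have key : U * U - V * V * (C H * Hs.map C) = 0 := by
    apply eq_zero_of_eval_X_pow (R := R) _ _ (Nat.lt_succ_self _)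
    · intro i
      rw [coeff_sub]
      refine lt_of_le_of_lt (natDegree_sub_le _ _) (max_lt ?_ ?_)
      · refine lt_of_le_of_lt (coeff_mul_natDegree_le hU hU i) (by omega)
      · refine lt_of_le_of_lt (coeff_mul_natDegree_le (b := 2 * d)
          (coeff_mul_natDegree_le hV hV) ?_ i) (by omega)
        intro i
        rw [coeff_C_mul, coeff_map]
        refine natDegree_mul_le.trans ?_
        rw [natDegree_C, hdeg]; omega
    · rw [eval_sub, eval_mul, eval_mul, eval_mul, eval_mul, eval_C, ← hpow, ← pow_succ']
      have e : R + 1 = (r + 1) * 2 := by omega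
      rw [eq_neg_of_add_eq_zero_left h, e, pow_mul]; ring
  by_cases hV0 : V = 0
  · subst hV0
    simp only [zero_mul, mul_zero, sub_zero, mul_self_eq_zero] at key
    exact ⟨key, rfl⟩
  exfalso
  -- Comparing leading coefficients in `Y` makes `H` a constant times a square in `F[X]`.
  have h1 := congrArg leadingCoeff (sub_eq_zero.1 key)
  simp only [leadingCoeff_mul, leadingCoeff_C, leadingCoeff_map_of_injective C_injective] at h1
  have hv : V.leadingCoeff ≠ 0 := leadingCoeff_ne_zero.2 hV0
  have hc : Hs.leadingCoeff ≠ 0 := leadingCoeff_ne_zero.2 hHs0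
  have h2 : V.leadingCoeff ∣ U.leadingCoeff := by
    rw [← UniqueFactorizationMonoid.pow_dvd_pow_iff_dvd two_ne_zero, pow_two, pow_two, h1]
    exact dvd_mul_right _ _
  obtain ⟨w, hw⟩ := h2
  rw [hw] at h1
  have h3 : w * w = H * C Hs.leadingCoeff := by
    apply mul_left_cancel₀ (mul_ne_zero hv hv)
    rw [← h1]; ring
  have h4 : IsUnit w := by
    apply hsq
    refine ⟨C (Hs.leadingCoeff)⁻¹, ?_⟩
    rw [h3, mul_assoc, ← C_mul, mul_inv_cancel₀ hc, C_1, mul_one]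
  have h5 := natDegree_eq_zero_of_isUnit (h4.mul h4)
  rw [h3, natDegree_mul_C hc] at h5
  omega

/-- **Stepanov's method**, in Bombieri's form. Over a field with `R ^ 2` elements, a squarefree
polynomial of even degree takes square values on at most `R ^ 2 / 2 + O(R)` points. A nonzero
polynomial `M` of degree at most the claimed bound is produced whose `R`-th power agrees, at every
such point, with a polynomial that linear algebra allows one to choose identically zero. -/
theorem card_isSquare_le {F : Type*} [Field F] [Fintype F] [DecidableEq F] {p k r d : ℕ}
    [Fact p.Prime] [CharP F p] (hR : p ^ k = 2 * r + 1)
    (hF : Fintype.card F = (p ^ k) ^ 2) {H : F[X]} (hsq : Squarefree H)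
    (hdeg : H.natDegree = 2 * d) (hd : 0 < d) (hdr : d < r) (S : Finset F)
    (hS : ∀ y ∈ S, IsSquare (H.eval y)) :
    #S ≤ (r + d + 2) * p ^ k := by
  set R := p ^ k with hRdef
  -- Coefficients are sought for the two families `X ^ (R * i + j)` and `X ^ (R * i + j) * H ^ (r + 1)`;
  -- there are more of them than the dimension `B` of the space in which these polynomials lie.
  let ι := (Fin (r + d + 2) × Fin r) ⊕ (Fin (r + 2) × Fin (r - d))
  let B := 2 * r ^ 2 + d + 1
  let v₀ : ι → F[X] := Sum.elim (fun x => X ^ (R * x.2 + x.1 : ℕ))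
    (fun x => X ^ (R * x.2 + x.1 : ℕ) * H ^ (r + 1))
  have hv₀ : ∀ i, v₀ i ∈ degreeLT F B := by
    intro i
    rw [mem_degreeLT]
    refine lt_of_le_of_lt degree_le_natDegree (Nat.cast_lt.2 ?_)
    rcases i with ⟨j, i⟩ | ⟨j, i⟩
    · simp only [v₀, Sum.elim_inl, natDegree_X_pow]
      have h1 : (i : ℕ) ≤ r - 1 := by have := i.2; omega
      have h2 := j.2
      have h3 : R * i ≤ R * (r - 1) := Nat.mul_le_mul_left _ h1
      obtain ⟨s, rfl⟩ : ∃ s, r = s + 1 := ⟨r - 1, by omega⟩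
      simp only [Nat.add_sub_cancel] at h3
      have : R * s + (s + 1 + d + 2) ≤ B := by rw [hR]; simp only [B]; nlinarith
      omega
    · simp only [v₀, Sum.elim_inr]
      refine lt_of_le_of_lt natDegree_mul_le ?_
      rw [natDegree_X_pow]
      have h0 : (H ^ (r + 1)).natDegree = (r + 1) * (2 * d) := by rw [natDegree_pow, hdeg]
      rw [h0]
      obtain ⟨e, he⟩ : ∃ e, r = d + 1 + e := ⟨r - d - 1, by omega⟩
      have h1 : (i : ℕ) ≤ e := by have := i.2; omega
      have h2 := j.2
      have h3 : R * i ≤ R * e := Nat.mul_le_mul_left _ h1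
      have : R * e + (r + 2) + (r + 1) * (2 * d) ≤ B := by
        rw [hR]; simp only [B]; rw [he]; nlinarith
      omega
  let v : ι → degreeLT F B := fun i => ⟨v₀ i, hv₀ i⟩
  have hfin : Module.finrank F (degreeLT F B) = B := by
    rw [(degreeLTEquiv F B).finrank_eq, Module.finrank_fin_fun]
  have : FiniteDimensional F (degreeLT F B) :=
    LinearEquiv.finiteDimensional (degreeLTEquiv F B).symm
  have hdep : ¬ LinearIndependent F v := by
    intro hli
    have h1 := hli.fintype_card_le_finrank
    rw [hfin] at h1
    simp only [ι, B, Fintype.card_sum, Fintype.card_prod, Fintype.card_fin] at h1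
    obtain ⟨e, he⟩ : ∃ e, r = d + 1 + e := ⟨r - d - 1, by omega⟩
    rw [show r - d = 1 + e by omega, he] at h1
    nlinarith
  obtain ⟨g, hg, i₀, hi₀⟩ := Fintype.not_linearIndependent_iff.1 hdep
  have hg' : ∑ i, g i • v₀ i = 0 := by
    have := congrArg (Subtype.val) hg
    simpa [v] using this
  simp only [ι, Fintype.sum_sum_type, v₀, Sum.elim_inl, Sum.elim_inr] at hg'
  let U : F[X][X] := ∑ x : Fin (r + d + 2) × Fin r,
    C (C (g (.inl x) ^ R) * X ^ (x.2 : ℕ)) * X ^ (x.1 : ℕ)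
  let V : F[X][X] := ∑ x : Fin (r + 2) × Fin (r - d),
    C (C (g (.inr x) ^ R) * X ^ (x.2 : ℕ)) * X ^ (x.1 : ℕ)
  -- `M` swaps the roles of `y` and `y ^ R`; applying Frobenius swaps them back, because
  -- `(y ^ R) ^ R = y` on `F`, so that `M(y) ^ R` is the relation `hg'` evaluated at `y`.
  let M : F[X] := U.eval (X ^ R) + V.eval (X ^ R) * H ^ (r + 1)
  have hMe : ∀ y, M.eval y = ∑ x : Fin (r + d + 2) × Fin r,
      g (.inl x) ^ R * y ^ (x.2 : ℕ) * (y ^ R) ^ (x.1 : ℕ) +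
      (∑ x : Fin (r + 2) × Fin (r - d), g (.inr x) ^ R * y ^ (x.2 : ℕ) * (y ^ R) ^ (x.1 : ℕ))
        * H.eval y ^ (r + 1) := by
    intro y
    simp [M, U, V, eval_finsetSum]
  have hQ : ∀ z : F, (z ^ R) ^ R = z := by
    intro z; rw [← pow_mul, ← pow_two, ← hF, FiniteField.pow_card]
  have hpow : ∀ (y : F) (i j : ℕ), (y ^ i) ^ R * ((y ^ R) ^ j) ^ R = y ^ (R * i + j) := by
    intro y i j
    rw [pow_right_comm y i, pow_right_comm (y ^ R) j, hQ, pow_add, pow_mul]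
  have hvan : ∀ y ∈ S, M.eval y = 0 := by
    intro y hy
    obtain ⟨w, hw⟩ := hS y hy
    -- With `H(y) = w ^ 2`, one has `H(y) ^ (r + 1) = w ^ (R + 1)`, the norm of `w` to the field with
    -- `R` elements, which is fixed by the `R`-th power map.
    have h1 : (H.eval y ^ (r + 1)) ^ R = H.eval y ^ (r + 1) := by
      have e : H.eval y ^ (r + 1) = w ^ R * w := by
        rw [hw, ← pow_two, ← pow_mul, ← pow_succ]; congr 1; omega
      rw [e, mul_pow, hQ, mul_comm]
    have h2 : (M.eval y) ^ R = 0 := by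
      have h3 := congrArg (eval y) hg'
      rw [hMe, hRdef, add_pow_char_pow, mul_pow, sum_pow_char_pow, sum_pow_char_pow, ← hRdef, h1]
      rw [eval_zero] at h3
      rw [← h3]
      simp only [eval_add, eval_finsetSum, eval_smul, eval_mul, eval_pow, eval_X, smul_eq_mul,
        mul_pow, hQ, sum_mul]
      congr 1
      · refine sum_congr rfl fun x _ => ?_
        rw [mul_assoc, hpow]
      · refine sum_congr rfl fun x _ => ?_
        rw [mul_assoc (g _), hpow, mul_assoc]
    exact eq_zero_of_pow_eq_zero h2
  have hcU : ∀ n, (U.coeff n).natDegree ≤ r - 1 := by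
    intro n
    simp only [U, finsetSum_coeff]
    refine natDegree_sum_le_of_forall_le _ _ fun x _ => ?_
    rw [coeff_C_mul_X_pow]
    split_ifs
    · refine (natDegree_C_mul_X_pow_le _ _).trans ?_
      have := x.2.2; omega
    · simp
  have hcV : ∀ n, (V.coeff n).natDegree ≤ r - d - 1 := by
    intro n
    simp only [V, finsetSum_coeff]
    refine natDegree_sum_le_of_forall_le _ _ fun x _ => ?_
    rw [coeff_C_mul_X_pow]
    split_ifs
    · refine (natDegree_C_mul_X_pow_le _ _).trans ?_
      have := x.2.2; omega
    · simp
  have hM0 : M ≠ 0 := by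
    intro h0
    obtain ⟨hU0, hV0⟩ :=
      stepanov_independent hR hsq hdeg hd hdr U V hcU hcV h0
    apply hi₀
    rcases i₀ with ⟨j, i⟩ | ⟨j, i⟩
    · have h1 : (U.coeff j).coeff i = g (.inl (j, i)) ^ R := by
        simp only [U, finsetSum_coeff, coeff_C_mul_X_pow]
        rw [sum_eq_single (j, i)]
        · rw [if_pos rfl, coeff_C_mul_X_pow, if_pos rfl]
        · rintro ⟨j', i'⟩ _ hne
          split_ifs with hj
          · rw [coeff_C_mul_X_pow, if_neg]
            intro hi
            exact hne (Prod.ext (Fin.ext hj.symm) (Fin.ext hi.symm))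
          · simp
        · simp
      rw [hU0] at h1
      simp only [coeff_zero] at h1
      exact eq_zero_of_pow_eq_zero h1.symm
    · have h1 : (V.coeff j).coeff i = g (.inr (j, i)) ^ R := by
        simp only [V, finsetSum_coeff, coeff_C_mul_X_pow]
        rw [sum_eq_single (j, i)]
        · rw [if_pos rfl, coeff_C_mul_X_pow, if_pos rfl]
        · rintro ⟨j', i'⟩ _ hne
          split_ifs with hj
          · rw [coeff_C_mul_X_pow, if_neg]
            intro hi
            exact hne (Prod.ext (Fin.ext hj.symm) (Fin.ext hi.symm))
          · simp
        · simp
      rw [hV0] at h1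
      simp only [coeff_zero] at h1
      exact eq_zero_of_pow_eq_zero h1.symm
  have hMdeg : M.natDegree ≤ (r + d + 2) * R := by
    refine natDegree_add_le_of_degree_le ?_ ?_
    · simp only [U, eval_finsetSum, eval_mul, eval_pow, eval_X, eval_C]
      refine natDegree_sum_le_of_forall_le _ _ fun x _ => ?_
      rw [← pow_mul, mul_assoc, ← pow_add]
      refine (natDegree_C_mul_X_pow_le _ _).trans ?_
      have h1 := x.2.2
      have h2 : (x.1 : ℕ) + 1 ≤ r + d + 2 := x.1.2
      nlinarith [Nat.mul_le_mul_left R h2]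
    · have h0 : (H ^ (r + 1)).natDegree = (r + 1) * (2 * d) := by rw [natDegree_pow, hdeg]
      refine natDegree_mul_le.trans ?_
      rw [h0]
      have : (eval (X ^ R) V).natDegree ≤ R * (r + 1) + (r - d - 1) := by
        simp only [V, eval_finsetSum, eval_mul, eval_pow, eval_X, eval_C]
        refine natDegree_sum_le_of_forall_le _ _ fun x _ => ?_
        rw [← pow_mul, mul_assoc, ← pow_add]
        refine (natDegree_C_mul_X_pow_le _ _).trans ?_
        have h1 := x.2.2
        have h2 : (x.1 : ℕ) ≤ r + 1 := by have := x.1.2; omega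
        have := Nat.mul_le_mul_left R h2
        omega
      refine (add_le_add_left this _).trans ?_
      obtain ⟨e, he⟩ : ∃ e, r = d + 1 + e := ⟨r - d - 1, by omega⟩
      rw [show r - d - 1 = e by omega, hR, he]
      nlinarith
  refine (card_le_degree_of_subset_roots (p := M) (Z := S) ?_).trans hMdeg
  intro y hy
  rw [mem_roots hM0]
  exact hvan y hy

/-- Stepanov's upper bound, applied to a nonsquare multiple of `(y ^ p - y) ^ 2 - 4 * a`, bounds the
quadratic character sum of the latter from below. -/
theorem neg_le_sum_quadraticChar_artinSchreier {F : Type*} [Field F] [Fintype F] [DecidableEq F]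
    {p k r : ℕ} [Fact p.Prime] [CharP F p] (h2 : p ≠ 2) (hR : p ^ k = 2 * r + 1)
    (hF : Fintype.card F = (p ^ k) ^ 2) (hpr : p < r) {a : F} (ha : a ≠ 0) :
    -((2 * p + 3) * p ^ k : ℤ) ≤ ∑ y : F, quadraticChar F ((y ^ p - y) ^ 2 - 4 * a) := by
  have hp := (Fact.out : p.Prime)
  have hchar : ringChar F ≠ 2 := by rwa [ringChar.eq F p]
  have h20 : (2 : F) ≠ 0 := Ring.two_ne_zero hchar
  obtain ⟨ν, hν⟩ := quadraticChar_exists_neg_one hchar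
  have hν0 : ν ≠ 0 := by rintro rfl; simp at hν
  let T : F[X] := X ^ p - X
  let H : F[X] := C ν * (T ^ 2 - C (4 * a))
  have hT : T.natDegree = p := by
    have : (X : F[X]).natDegree < (X ^ p : F[X]).natDegree := by
      rw [natDegree_X_pow, natDegree_X]; exact hp.one_lt
    simp only [T]
    rw [natDegree_sub_eq_left_of_natDegree_lt this, natDegree_X_pow]
  have hdeg : H.natDegree = 2 * p := by
    rw [natDegree_C_mul hν0, natDegree_sub_C, natDegree_pow, hT]
  have hdT : derivative T = -1 := by
    simp [T, derivative_X_pow]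
  have hsq : Squarefree H := by
    apply Separable.squarefree
    refine ⟨C (-(4 * a * ν)⁻¹), C (-(4 * a * ν)⁻¹ * 2⁻¹) * T, ?_⟩
    simp only [H, derivative_C_mul, derivative_sub, derivative_C, derivative_pow, hdT, sub_zero]
    have e1 : C (-(4 * a * ν)⁻¹ * 2⁻¹) * C (2 : F) = C (-(4 * a * ν)⁻¹) := by
      rw [← C_mul, mul_assoc, inv_mul_cancel₀ h20, mul_one]
    have e2 : C (-(4 * a * ν)⁻¹) * (C ν * C (4 * a)) = -1 := by
      rw [← C_mul, ← C_mul, ← C_1, ← C_neg]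
      congr 1
      have : (4 : F) ≠ 0 := by
        rw [show (4 : F) = 2 * 2 by norm_num]; exact mul_ne_zero h20 h20
      field_simp
    push_cast
    linear_combination (-T ^ 2 * C ν) * e1 - e2
  classical
  let S : Finset F := univ.filter fun y => IsSquare (H.eval y)
  have hS := card_isSquare_le hR hF hsq hdeg hp.pos hpr S (by simp [S])
  have hev : ∀ y, quadraticChar F (H.eval y) = -quadraticChar F ((y ^ p - y) ^ 2 - 4 * a) := by
    intro y
    have e : H.eval y = ν * ((y ^ p - y) ^ 2 - 4 * a) := by simp [H, T]
    rw [e, map_mul, hν, neg_one_mul]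
  have h1 : ∀ y, quadraticChar F (H.eval y) ≤ 2 * (if IsSquare (H.eval y) then 1 else 0) - 1 := by
    intro y
    by_cases h0 : H.eval y = 0
    · simp [h0]
    · split_ifs with h
      · rw [(quadraticChar_one_iff_isSquare h0).2 h]; norm_num
      · rw [quadraticChar_neg_one_iff_not_isSquare.2 h]; norm_num
  have h3 : ∑ y, quadraticChar F (H.eval y) ≤ 2 * #S - (p ^ k : ℤ) ^ 2 := by
    refine (sum_le_sum fun y _ => h1 y).trans ?_
    rw [sum_sub_distrib, ← mul_sum, sum_boole]
    simp [S, hF]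
  simp only [hev, sum_neg_distrib] at h3
  have h4 : (#S : ℤ) ≤ (r + p + 2) * p ^ k := by exact_mod_cast hS
  have h5 : (p ^ k : ℤ) = 2 * r + 1 := by exact_mod_cast hR
  rw [h5] at h3 h4 ⊢
  linarith [h3, h4]

/-! ### Kloosterman sums over a quadratic extension -/

/-- The Kloosterman sum `∑_{x ≠ 0} ψ(x + a / x)`. The sum is taken over all `x`; since `0⁻¹ = 0`, the
term at `x = 0` is `ψ 0 = 1`, which is subtracted. -/
noncomputable def kloosterman {F : Type*} [Field F] [Fintype F] (ψ : AddChar F ℂ) (a : F) : ℂ :=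
  ∑ x, ψ (x + a * x⁻¹) - 1

theorem kloosterman_eq {F : Type*} [Field F] [Fintype F] [DecidableEq F] (ψ : AddChar F ℂ)
    (a : F) : kloosterman ψ a = ∑ x, if x = 0 then 0 else ψ (x + a * x⁻¹) := by
  rw [kloosterman, sub_eq_iff_eq_add, ← sum_erase_add _ _ (mem_univ 0),
    ← sum_erase_add univ (fun x => if x = 0 then 0 else ψ (x + a * x⁻¹)) (mem_univ 0)]
  simp only [inv_zero, mul_zero, add_zero, AddChar.map_zero_eq_one, if_true]
  congr 1
  refine sum_congr rfl fun x hx => ?_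
  rw [if_neg (ne_of_mem_erase hx)]

/-- `w` has `1 + χ w` square roots. -/
theorem sum_comp_sq {F : Type*} [Field F] [Fintype F] [DecidableEq F] (h2 : ringChar F ≠ 2)
    (g : F → ℂ) : ∑ v, g (v ^ 2) = ∑ w, (1 + (quadraticChar F w : ℂ)) * g w := by
  rw [← sum_fiberwise univ (fun v : F => v ^ 2)]
  refine sum_congr rfl fun w _ => ?_
  have h := quadraticChar_card_sqrts h2 w
  rw [sum_congr rfl (g := fun _ => g w) (fun v hv => by rw [(mem_filter.1 hv).2]), sum_const,
    nsmul_eq_mul]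
  congr 1
  have h3 : ({x : F | x ^ 2 = w} : Set F).toFinset = univ.filter fun x => x ^ 2 = w := by
    ext; simp
  rw [h3] at h
  rw [add_comm]
  exact_mod_cast h

/-- As `v` runs over the field, `v ^ 2` and `ν * v ^ 2` together, with `ν` a nonsquare, take every
value exactly twice. -/
theorem sum_comp_sq_add {F : Type*} [Field F] [Fintype F] [DecidableEq F] (h2 : ringChar F ≠ 2)
    {ν : F} (hν : quadraticChar F ν = -1) (g : F → ℂ) :
    ∑ v, g (v ^ 2) + ∑ v, g (ν * v ^ 2) = 2 * ∑ w, g w := by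
  have hν0 : ν ≠ 0 := by rintro rfl; simp at hν
  have h1 : ∑ v, g (ν * v ^ 2) = ∑ w, (1 - (quadraticChar F w : ℂ)) * g w := by
    rw [sum_comp_sq h2 (fun x => g (ν * x)), ← Equiv.sum_comp (Equiv.mulLeft₀ ν hν0)
      (fun w => (1 - (quadraticChar F w : ℂ)) * g w)]
    refine sum_congr rfl fun w _ => ?_
    simp only [Equiv.mulLeft₀_apply, map_mul, hν]
    push_cast; ring
  rw [sum_comp_sq h2, h1, ← sum_add_distrib, mul_sum]
  refine sum_congr rfl fun w _ => ?_
  ring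

/-- Let `F' = F(√ν)` be the quadratic extension and `ψ₂ = ψ ∘ tr`. In terms of trace and norm, the
Kloosterman sum over `F'` runs over `N = u ^ 2 - ν * v ^ 2`, and the square of the sum over `F`, in the
coordinates `x = u + v`, `y = u - v`, runs over `N = u ^ 2 - v ^ 2`. The two together cover every `N`
twice, and the sum of `ψ (2 * u * (1 + a / N))` over all `u` and `N ≠ 0` is `q`. -/
theorem kloosterman_quadraticAlgebra {F : Type*} [Field F] [Fintype F] [DecidableEq F]
    (h2 : ringChar F ≠ 2) {ν : F} (hν : quadraticChar F ν = -1)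
    [Fact (∀ r : F, r ^ 2 ≠ ν + 0 * r)] [Fintype (QuadraticAlgebra F ν 0)]
    {ψ : AddChar F ℂ} (hψ : ψ.IsPrimitive) {ψ₂ : AddChar (QuadraticAlgebra F ν 0) ℂ}
    (hψ₂ : ∀ z, ψ₂ z = ψ (2 * z.re)) {a : F} (ha : a ≠ 0) :
    kloosterman ψ₂ (algebraMap F _ a) = 2 * Fintype.card F - kloosterman ψ a ^ 2 := by
  classical
  have h20 : (2 : F) ≠ 0 := Ring.two_ne_zero h2
  let f : F → F → ℂ := fun u N => if N = 0 then 0 else ψ (2 * u * (1 + a * N⁻¹))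
  have hK2 : kloosterman ψ₂ (algebraMap F _ a) = ∑ u, ∑ v, f u (u ^ 2 - ν * v ^ 2) := by
    rw [kloosterman_eq, ← (QuadraticAlgebra.equivProd ν 0).symm.sum_comp, Fintype.sum_prod_type]
    refine sum_congr rfl fun u _ => sum_congr rfl fun v _ => ?_
    set z : QuadraticAlgebra F ν 0 := (QuadraticAlgebra.equivProd ν 0).symm (u, v) with hz
    have hn : z.norm = u ^ 2 - ν * v ^ 2 := by
      rw [QuadraticAlgebra.norm_def]; simp [hz]; ring
    have h0 : z = 0 ↔ u ^ 2 - ν * v ^ 2 = 0 := by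
      rw [← hn, QuadraticAlgebra.norm_eq_zero_iff_eq_zero]
    simp only [f, h0]
    congr 1
    rw [hψ₂]
    congr 1
    have : (z + algebraMap F (QuadraticAlgebra F ν 0) a * z⁻¹).re
        = u + a * (u * (u ^ 2 - ν * v ^ 2)⁻¹) := by
      have e : z⁻¹ = z.norm⁻¹ • star z := rfl
      rw [e, hn]
      simp [hz]
      left; ring_nf
    rw [this]; ring
  have hK : kloosterman ψ a ^ 2 = ∑ u, ∑ v, f u (u ^ 2 - v ^ 2) := by
    have e : kloosterman ψ a ^ 2
        = ∑ x, ∑ y, if x * y = 0 then 0 else ψ ((x + y) * (1 + a * (x * y)⁻¹)) := by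
      rw [kloosterman_eq, pow_two, sum_mul_sum]
      refine sum_congr rfl fun x _ => sum_congr rfl fun y _ => ?_
      by_cases hx : x = 0
      · simp [hx]
      by_cases hy : y = 0
      · simp [hy]
      rw [if_neg hx, if_neg hy, if_neg (mul_ne_zero hx hy), ← AddChar.map_add_eq_mul]
      congr 1
      field_simp
      ring
    rw [e, ← Fintype.sum_prod_type', ← Fintype.sum_prod_type']
    symm
    refine Fintype.sum_bijective (fun x : F × F => (x.1 + x.2, x.1 - x.2)) ?_ _ _ ?_
    · rw [← Finite.injective_iff_bijective]
      rintro ⟨u, v⟩ ⟨u', v'⟩ h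
      simp only [Prod.mk.injEq] at h ⊢
      constructor
      · apply mul_left_cancel₀ h20; linear_combination h.1 + h.2
      · apply mul_left_cancel₀ h20; linear_combination h.1 - h.2
    · rintro ⟨u, v⟩
      simp only [f]
      rw [show (u + v) * (u - v) = u ^ 2 - v ^ 2 by ring, show u + v + (u - v) = 2 * u by ring]
  have hsum : ∑ u, ∑ v, f u (u ^ 2 - v ^ 2) + ∑ u, ∑ v, f u (u ^ 2 - ν * v ^ 2)
      = 2 * Fintype.card F := by
    have h1 : ∀ u, ∑ v, f u (u ^ 2 - v ^ 2) + ∑ v, f u (u ^ 2 - ν * v ^ 2) = 2 * ∑ N, f u N := by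
      intro u
      rw [sum_comp_sq_add h2 hν (fun w => f u (u ^ 2 - w))]
      congr 1
      exact Equiv.sum_comp (Equiv.subLeft (u ^ 2)) (f u)
    rw [← sum_add_distrib, sum_congr rfl fun u _ => h1 u, ← mul_sum, sum_comm]
    congr 1
    have h3 : ∀ N, ∑ u, f u N = if N = -a then (Fintype.card F : ℂ) else 0 := by
      intro N
      by_cases hN : N = 0
      · rw [if_neg (by rw [hN]; exact fun h => ha (neg_eq_zero.1 h.symm))]
        simp [f, hN]
      · simp only [f, hN, if_false]
        have : ∀ u, 2 * u * (1 + a * N⁻¹) = u * (2 * (1 + a * N⁻¹)) := fun u => by ring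
        simp only [this]
        rw [AddChar.sum_mulShift _ hψ]
        have e : 2 * (1 + a * N⁻¹) = 0 ↔ N = -a := by
          rw [mul_eq_zero, or_iff_right h20]
          field_simp
          exact ⟨fun h => by linear_combination h, fun h => by linear_combination h⟩
        simp only [e]
        split_ifs <;> simp
    simp [h3]
  rw [hK2, hK]
  linear_combination hsum

/-! ### Kloosterman sums and Artin–Schreier covers -/

/-- The equation `x + a / x = u` has `1 + χ(u ^ 2 - 4 * a)` solutions `x`, where `χ` is the quadratic
character. -/
theorem sum_comp_add_mul_inv {F : Type*} [Field F] [Fintype F] [DecidableEq F]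
    (h2 : ringChar F ≠ 2) (g : F → ℂ) {a : F} (ha : a ≠ 0) :
    (∑ x, if x = 0 then 0 else g (x + a * x⁻¹))
      = ∑ u, (1 + (quadraticChar F (u ^ 2 - 4 * a) : ℂ)) * g u := by
  have h20 : (2 : F) ≠ 0 := Ring.two_ne_zero h2
  have e : (∑ x, if x = 0 then 0 else g (x + a * x⁻¹))
      = ∑ x ∈ univ.filter (fun x : F => x ≠ 0), g (x + a * x⁻¹) := by
    rw [sum_filter]
    refine sum_congr rfl fun x _ => ?_
    by_cases hx : x = 0 <;> simp [hx]
  rw [e, ← sum_fiberwise _ (fun x : F => x + a * x⁻¹)]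
  refine sum_congr rfl fun u _ => ?_
  have h := quadraticChar_card_sqrts h2 (u ^ 2 - 4 * a)
  rw [sum_congr rfl (g := fun _ => g u) (fun v hv => by rw [(mem_filter.1 hv).2]), sum_const,
    nsmul_eq_mul]
  congr 1
  have h3 : #(({x ∈ univ.filter (fun x : F => x ≠ 0) | x + a * x⁻¹ = u}))
      = #({x : F | x ^ 2 = u ^ 2 - 4 * a} : Set F).toFinset := by
    refine card_bij (fun x _ => 2 * x - u) ?_ ?_ ?_
    · intro x hx
      simp only [mem_filter, mem_univ, true_and] at hx
      obtain ⟨hx0, hx⟩ := hx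
      simp only [Set.mem_toFinset, Set.mem_ofPred_eq]
      rw [← hx]; field_simp; ring
    · intro x _ y _ h
      exact mul_left_cancel₀ h20 (sub_left_injective h)
    · intro v hv
      simp only [Set.mem_toFinset, Set.mem_ofPred_eq] at hv
      have h4 : (4 : F) ≠ 0 := by
        rw [show (4 : F) = 2 * 2 by norm_num]; exact mul_ne_zero h20 h20
      have hne : u + v ≠ 0 := by
        intro h0
        have : 4 * a = 0 := by linear_combination (u - v) * h0 + hv
        exact (mul_ne_zero h4 ha) this
      refine ⟨(u + v) / 2, ?_, by field_simp; ring⟩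
      simp only [mem_filter, mem_univ, true_and]
      refine ⟨div_ne_zero hne h20, ?_⟩
      field_simp
      linear_combination hv
  rw [h3, add_comm]
  exact_mod_cast h

theorem kloosterman_eq_sum_quadraticChar {F : Type*} [Field F] [Fintype F] [DecidableEq F]
    (h2 : ringChar F ≠ 2) (ψ : AddChar F ℂ) {a : F} (ha : a ≠ 0) :
    kloosterman ψ a = ∑ u, (1 + (quadraticChar F (u ^ 2 - 4 * a) : ℂ)) * ψ u := by
  rw [kloosterman_eq, sum_comp_add_mul_inv h2 ψ ha]

theorem addChar_pow_char {F : Type*} [Field F] {p : ℕ} [CharP F p] (ψ : AddChar F ℂ) :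
    ψ ^ p = 1 := by
  ext x
  rw [AddChar.pow_apply, ← AddChar.map_nsmul_eq_pow, nsmul_eq_mul, CharP.cast_eq_zero, zero_mul,
    AddChar.map_zero_eq_one, AddChar.one_apply]

theorem addChar_pow_ne_one {F : Type*} [Field F] {p : ℕ} [Fact p.Prime] [CharP F p]
    {ψ : AddChar F ℂ} (hψ : ψ ≠ 1) {j : ℕ} (hj : ¬ p ∣ j) : ψ ^ j ≠ 1 := by
  intro h
  apply hψ
  have hc : p.Coprime j := ((Fact.out : p.Prime).coprime_iff_not_dvd).2 hj
  have := pow_gcd_eq_one.2 ⟨addChar_pow_char (p := p) ψ, h⟩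
  rwa [hc.gcd_eq_one, pow_one] at this

/-- **Additive Hilbert 90** by counting: the left side is `p` or `0` according as `ψ u = 1` or not, it
dominates the number of solutions of `y ^ p - y = u`, and both sum to the size of the field. -/
theorem card_artinSchreier {F : Type*} [Field F] [Fintype F] [DecidableEq F]
    {p : ℕ} [Fact p.Prime] [CharP F p] {ψ : AddChar F ℂ} (hψ : ψ ≠ 1)
    (hψp : ∀ x, ψ (x ^ p) = ψ x) (u : F) :
    ∑ j ∈ range p, ψ u ^ j = #{y : F | y ^ p - y = u} := by
  have hp := (Fact.out : p.Prime)
  have hm : ∀ u, ∑ j ∈ range p, ψ u ^ j = ((if ψ u = 1 then p else 0 : ℕ) : ℂ) := by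
    intro u
    split_ifs with h
    · simp [h]
    · have h1 : ψ u ^ p = 1 := by
        rw [← AddChar.pow_apply, addChar_pow_char, AddChar.one_apply]
      rw [geom_sum_eq h, h1]; simp
  have hle : ∀ u ∈ (univ : Finset F), #{y : F | y ^ p - y = u} ≤ if ψ u = 1 then p else 0 := by
    intro u _
    split_ifs with h
    · have hdeg : (X ^ p - X - C u : F[X]).natDegree = p := by
        have : (X : F[X]).natDegree < (X ^ p : F[X]).natDegree := by
          rw [natDegree_X_pow, natDegree_X]; exact hp.one_lt
        rw [natDegree_sub_C, natDegree_sub_eq_left_of_natDegree_lt this, natDegree_X_pow]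
      refine (card_le_degree_of_subset_roots (p := X ^ p - X - C u) ?_).trans hdeg.le
      intro y hy
      have hy' : y ^ p - y = u := by simpa using hy
      rw [mem_roots (by intro h0; rw [h0] at hdeg; exact hp.ne_zero hdeg.symm)]
      simp [hy']
    · rw [Nat.le_zero, card_eq_zero, filter_eq_empty_iff]
      rintro y _ rfl
      apply h
      rw [sub_eq_add_neg, AddChar.map_add_eq_mul, AddChar.map_neg_eq_inv, hψp, mul_inv_cancel₀]
      intro h0
      have := AddChar.map_add_eq_mul ψ y (-y)
      rw [h0, zero_mul, add_neg_cancel, AddChar.map_zero_eq_one] at this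
      exact one_ne_zero this
  have hs1 : ∑ u : F, #{y : F | y ^ p - y = u} = Fintype.card F := by
    rw [← card_eq_sum_card_fiberwise (fun _ _ => mem_univ _)]; rfl
  have hs2 : ∑ u : F, (if ψ u = 1 then p else 0) = Fintype.card F := by
    have : ((∑ u : F, (if ψ u = 1 then p else 0) : ℕ) : ℂ) = Fintype.card F := by
      rw [Nat.cast_sum, sum_congr rfl fun u _ => (hm u).symm, sum_comm,
        sum_eq_single 0]
      · simp
      · intro j hj hj0
        have := AddChar.sum_eq_zero_of_ne_one (addChar_pow_ne_one (p := p) hψ (j := j)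
          (fun h => by
            have := Nat.le_of_dvd (by omega) h
            have := mem_range.1 hj
            omega))
        simpa only [AddChar.pow_apply] using this
      · intro h; exact absurd (mem_range.2 hp.pos) h
    exact_mod_cast this
  have := (sum_eq_sum_iff_of_le hle).1 (hs1.trans hs2.symm) u (mem_univ _)
  rw [hm, this]

/-- The Kloosterman sums of the nontrivial powers of `ψ` add up to a point count on the curve
`z ^ 2 = (y ^ p - y) ^ 2 - 4 * a`. -/
theorem sum_kloosterman_pow {F : Type*} [Field F] [Fintype F] [DecidableEq F]
    {p : ℕ} [Fact p.Prime] [CharP F p] (h2 : p ≠ 2) {ψ : AddChar F ℂ} (hψ : ψ ≠ 1)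
    (hψp : ∀ x, ψ (x ^ p) = ψ x) {a : F} (ha : a ≠ 0) :
    ∑ j ∈ Ico 1 p, kloosterman (ψ ^ j) a
      = 1 + ((∑ y : F, quadraticChar F ((y ^ p - y) ^ 2 - 4 * a) : ℤ) : ℂ) := by
  have hp := (Fact.out : p.Prime)
  have hchar : ringChar F ≠ 2 := by rwa [ringChar.eq F p]
  have h0 : kloosterman (ψ ^ 0) a = Fintype.card F - 1 := by
    simp [kloosterman]
  have h1 : ∑ j ∈ range p, kloosterman (ψ ^ j) a
      = Fintype.card F + ((∑ y : F, quadraticChar F ((y ^ p - y) ^ 2 - 4 * a) : ℤ) : ℂ) := by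
    simp_rw [kloosterman_eq_sum_quadraticChar hchar _ ha]
    rw [sum_comm]
    simp_rw [AddChar.pow_apply, ← mul_sum, card_artinSchreier hψ hψp]
    have e : ∀ u : F, (1 + (quadraticChar F (u ^ 2 - 4 * a) : ℂ)) * #{y : F | y ^ p - y = u}
        = ∑ y ∈ univ.filter (fun y : F => y ^ p - y = u),
          (1 + (quadraticChar F ((y ^ p - y) ^ 2 - 4 * a) : ℂ)) := by
      intro u
      rw [sum_congr rfl (g := fun _ => 1 + (quadraticChar F (u ^ 2 - 4 * a) : ℂ))
        (fun v hv => by rw [(mem_filter.1 hv).2]), sum_const, nsmul_eq_mul, mul_comm]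
    rw [sum_congr rfl fun u _ => e u, sum_fiberwise, sum_add_distrib]
    simp
  rw [range_eq_Ico, sum_eq_sum_Ico_succ_bot hp.pos, h0] at h1
  linear_combination h1

/-! ### The bound for Kloosterman sums -/

theorem ofReal_re_kloosterman {F : Type*} [Field F] [Fintype F] (ψ : AddChar F ℂ) (a : F) :
    ((kloosterman ψ a).re : ℂ) = kloosterman ψ a := by
  rw [← Complex.conj_eq_iff_re]
  simp only [kloosterman, map_sub, map_sum, map_one]
  congr 1
  rw [← Equiv.sum_comp (Equiv.neg F)]
  refine sum_congr rfl fun x _ => ?_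
  rw [← AddChar.map_neg_eq_conj]
  congr 1
  simp only [Equiv.neg_apply, inv_neg]
  ring

/-- The Kloosterman sum, which is real, divided by `√q`. -/
noncomputable def normKloosterman {F : Type*} [Field F] [Fintype F] (ψ : AddChar F ℂ) (a : F) : ℝ :=
  (kloosterman ψ a).re / √(Fintype.card F)

/-- The `p`-power map multiplies `√ν` by an element of `F`, so it commutes with `re`. -/
theorem re_pow_char {F : Type*} [Field F] {p : ℕ} [Fact p.Prime] [CharP F p] (h2 : p ≠ 2) {ν : F}
    (z : QuadraticAlgebra F ν 0) : (z ^ p).re = z.re ^ p := by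
  have : CharP (QuadraticAlgebra F ν 0) p :=
    charP_of_injective_algebraMap QuadraticAlgebra.algebraMap_injective p
  obtain ⟨m, hm⟩ : Odd p := (Fact.out : p.Prime).odd_of_ne_two h2
  have hz : z = algebraMap F _ z.re + algebraMap F _ z.im * QuadraticAlgebra.omega := by
    ext <;> simp
  have hω : (QuadraticAlgebra.omega : QuadraticAlgebra F ν 0) ^ 2 = algebraMap F _ ν := by
    rw [pow_two]; ext <;> simp
  have hωp : (QuadraticAlgebra.omega : QuadraticAlgebra F ν 0) ^ p
      = algebraMap F _ (ν ^ m) * QuadraticAlgebra.omega := by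
    conv_lhs => rw [hm]
    rw [pow_succ, pow_mul, hω, map_pow]
  conv_lhs => rw [hz]
  rw [add_pow_char, mul_pow, hωp, ← map_pow, ← map_pow]
  simp [-map_pow]

/-- Passage to the quadratic extension turns each normalised Kloosterman sum `s` into `2 - s ^ 2`,
simultaneously for all nontrivial powers of `ψ`. -/
theorem exists_quadratic_step {F : Type} [Field F] [Fintype F] {p : ℕ} [Fact p.Prime] [CharP F p]
    (h2 : p ≠ 2) {ψ : AddChar F ℂ} (hψ : ψ ≠ 1) (hψp : ∀ x, ψ (x ^ p) = ψ x) {a : F}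
    (ha : a ≠ 0) :
    ∃ (F' : Type) (_ : Field F') (_ : Fintype F') (_ : CharP F' p) (ψ' : AddChar F' ℂ) (a' : F'),
      ψ' ≠ 1 ∧ (∀ x, ψ' (x ^ p) = ψ' x) ∧ a' ≠ 0 ∧
      Fintype.card F' = Fintype.card F ^ 2 ∧
      ∀ j, ¬ p ∣ j → normKloosterman (ψ' ^ j) a' = 2 - normKloosterman (ψ ^ j) a ^ 2 := by
  classical
  have hchar : ringChar F ≠ 2 := by rwa [ringChar.eq F p]
  have h20 : (2 : F) ≠ 0 := Ring.two_ne_zero hchar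
  obtain ⟨ν, hν⟩ := quadraticChar_exists_neg_one hchar
  have hns := quadraticChar_neg_one_iff_not_isSquare.1 hν
  have : Fact (∀ r : F, r ^ 2 ≠ ν + 0 * r) := ⟨fun r h => hns ⟨r, by rw [← pow_two, h]; ring⟩⟩
  let F' := QuadraticAlgebra F ν 0
  let _ : Fintype F' := Fintype.ofEquiv _ (QuadraticAlgebra.equivProd ν 0).symm
  have : CharP F' p := charP_of_injective_algebraMap (algebraMap F F').injective p
  have hcard : Fintype.card F' = Fintype.card F ^ 2 := by
    rw [Fintype.card_congr (QuadraticAlgebra.equivProd ν 0), Fintype.card_prod, pow_two]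
  let ψ' : AddChar F' ℂ := ψ.compAddMonoidHom
    ((AddMonoidHom.mulLeft (2 : F)).comp (QuadraticAlgebra.reₗ (R := F) (a := ν) (b := 0)).toAddMonoidHom)
  have hψ' : ∀ z : F', ψ' z = ψ (2 * z.re) := fun z => rfl
  refine ⟨F', inferInstance, inferInstance, inferInstance, ψ', algebraMap F F' a, ?_, ?_, ?_,
    hcard, ?_⟩
  · intro h
    apply hψ
    ext x
    have := hψ' (algebraMap F F' (x / 2))
    rw [h, AddChar.one_apply, QuadraticAlgebra.algebraMap_re, mul_div_cancel₀ _ h20] at this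
    rw [← this, AddChar.one_apply]
  · intro z
    rw [hψ', hψ']
    have hre : (z ^ p).re = z.re ^ p := re_pow_char h2 z
    have e2 : (2 : F) ^ p = 2 := by
      have := map_natCast (frobenius F p) 2
      simpa [frobenius_def] using this
    rw [hre, ← e2, ← mul_pow, hψp, e2]
  · exact (_root_.map_ne_zero _).2 ha
  · intro j hj
    have hK := kloosterman_quadraticAlgebra hchar hν
      (AddChar.IsPrimitive.of_ne_one (addChar_pow_ne_one (p := p) hψ hj)) (ψ₂ := ψ' ^ j)
      (fun z => by rw [AddChar.pow_apply, AddChar.pow_apply, hψ']) ha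
    rw [← ofReal_re_kloosterman (ψ ^ j)] at hK
    have hre : (kloosterman (ψ' ^ j) (algebraMap F F' a)).re
        = 2 * Fintype.card F - (kloosterman (ψ ^ j) a).re ^ 2 := by
      rw [hK]; norm_cast
    have hq : (0 : ℝ) < Fintype.card F := by exact_mod_cast Fintype.card_pos
    rw [normKloosterman, normKloosterman, hre, hcard]
    push_cast
    rw [Real.sqrt_sq hq.le, div_pow, Real.sq_sqrt hq.le]
    field_simp

theorem exists_tower {p : ℕ} [Fact p.Prime] (h2 : p ≠ 2) (n : ℕ) {F : Type} [Field F] [Fintype F]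
    [CharP F p] {ψ : AddChar F ℂ} (hψ : ψ ≠ 1) (hψp : ∀ x, ψ (x ^ p) = ψ x) {a : F}
    (ha : a ≠ 0) :
    ∃ (F' : Type) (_ : Field F') (_ : Fintype F') (_ : CharP F' p) (ψ' : AddChar F' ℂ) (a' : F'),
      ψ' ≠ 1 ∧ (∀ x, ψ' (x ^ p) = ψ' x) ∧ a' ≠ 0 ∧
      Fintype.card F' = Fintype.card F ^ 2 ^ n ∧
      ∀ j, ¬ p ∣ j → normKloosterman (ψ' ^ j) a'
        = (fun s : ℝ => 2 - s ^ 2)^[n] (normKloosterman (ψ ^ j) a) := by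
  induction n with
  | zero => exact ⟨F, inferInstance, inferInstance, inferInstance, ψ, a, hψ, hψp, ha, by simp,
      fun j _ => rfl⟩
  | succ n ih =>
    obtain ⟨F₁, _, _, _, ψ₁, a₁, hψ₁, hψp₁, ha₁, hc₁, hs₁⟩ := ih
    obtain ⟨F₂, i1, i2, i3, ψ₂, a₂, hψ₂, hψp₂, ha₂, hc₂, hs₂⟩ := exists_quadratic_step h2 hψ₁ hψp₁ ha₁
    refine ⟨F₂, i1, i2, i3, ψ₂, a₂, hψ₂, hψp₂, ha₂, ?_, ?_⟩
    · rw [hc₂, hc₁, ← pow_mul, pow_succ]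
    · intro j hj
      rw [hs₂ j hj, hs₁ j hj, Function.iterate_succ_apply']

/-- Outside `[-2, 2]` the excess of `|s|` over `2` grows at least fourfold under `s ↦ 2 - s ^ 2`. -/
theorem iterate_le {s ε : ℝ} (hε : 0 ≤ ε) (hs : 2 + ε ≤ |s|) (n : ℕ) :
    (fun s : ℝ => 2 - s ^ 2)^[n + 1] s ≤ -(2 + 4 ^ (n + 1) * ε) := by
  have key : ∀ (x δ : ℝ), 0 ≤ δ → 2 + δ ≤ |x| → 2 - x ^ 2 ≤ -(2 + 4 * δ) := by
    intro x δ hδ hx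
    have := pow_le_pow_left₀ (by positivity) hx 2
    rw [sq_abs] at this
    nlinarith
  induction n with
  | zero => simpa using key s ε hε hs
  | succ n ih =>
    rw [Function.iterate_succ_apply']
    have h0 : 0 ≤ 4 ^ (n + 1) * ε := by positivity
    have := key _ (4 ^ (n + 1) * ε) h0 ((le_neg.2 ih).trans (neg_le_abs _))
    refine this.trans (le_of_eq ?_)
    ring

/-- If `|s| > 2`, then high in the tower of quadratic extensions the normalised sum of `ψ` is as negative
as one likes while those of the other powers of `ψ` stay at most `2`. The total over all powers is
bounded below by Stepanov's method, uniformly in the tower: a contradiction. -/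
theorem abs_normKloosterman_le {F : Type} [Field F] [Fintype F] {p : ℕ} [Fact p.Prime] [CharP F p]
    (h2 : p ≠ 2) {ψ : AddChar F ℂ} (hψ : ψ ≠ 1) (hψp : ∀ x, ψ (x ^ p) = ψ x) {a : F}
    (ha : a ≠ 0) : |normKloosterman ψ a| ≤ 2 := by
  classical
  by_contra! hlt
  have hp := (Fact.out : p.Prime)
  have hp3 : 3 ≤ p := by have := hp.two_le; omega
  set ε := |normKloosterman ψ a| - 2 with hε
  have hε0 : 0 < ε := by linarith
  -- `4 * p + 4` exceeds the lower bound `2 * p + 3` plus the contribution `2 * (p - 2)` of the other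
  -- powers; the two extra levels in `n + 2 + 1` ensure the size condition `p < r` of Stepanov's bound.
  obtain ⟨n, hn⟩ := pow_unbounded_of_one_lt ((4 * p + 4 : ℝ) / ε) (show (1 : ℝ) < 4 by norm_num)
  have hn' : 4 * p + 4 < 4 ^ (n + 2 + 1) * ε := by
    rw [div_lt_iff₀ hε0] at hn
    refine hn.trans_le ?_
    gcongr
    · norm_num
    · omega
  obtain ⟨F', _, _, _, ψ', a', hψ', hψp', ha', hc, hs⟩ := exists_tower h2 (n + 2 + 1) hψ hψp ha
  obtain ⟨m, hm⟩ := FiniteField.card F p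
  obtain ⟨hm0, hm⟩ := hm
  set k := (m : ℕ) * 2 ^ (n + 2) with hk
  have hcR : Fintype.card F' = (p ^ k) ^ 2 := by
    rw [hc, hm, hk, ← pow_mul, ← pow_mul]; congr 1; ring
  have hodd : Odd (p ^ k) := (hp.odd_of_ne_two h2).pow
  obtain ⟨r, hr⟩ := hodd
  have hpr : p < r := by
    have hk4 : 4 ≤ k := by
      rw [hk, pow_add]
      have := m.pos
      have := Nat.one_le_two_pow (n := n)
      nlinarith [Nat.mul_le_mul (show 1 ≤ (m : ℕ) from m.pos) this]
    have h1 : p ^ 4 ≤ p ^ k := Nat.pow_le_pow_right hp.pos hk4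
    have h3 : 27 * p ≤ p ^ 4 := by
      have : 3 ^ 3 ≤ p ^ 3 := Nat.pow_le_pow_left hp3 3
      calc 27 * p ≤ p ^ 3 * p := Nat.mul_le_mul_right _ this
        _ = p ^ 4 := by ring
    omega
  have hlow := neg_le_sum_quadraticChar_artinSchreier h2 hr hcR hpr ha'
  have hsum := sum_kloosterman_pow h2 hψ' hψp' ha'
  have hre := congrArg Complex.re hsum
  rw [Complex.re_sum, Complex.add_re, Complex.one_re, Complex.intCast_re] at hre
  have hR0 : (0 : ℝ) < p ^ k := by have := hp.pos; positivity
  have hsq : √(Fintype.card F' : ℝ) = p ^ k := by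
    rw [hcR]; push_cast; exact Real.sqrt_sq hR0.le
  have hlow' : -(2 * p + 3 : ℝ) ≤ ∑ j ∈ Ico 1 p, normKloosterman (ψ' ^ j) a' := by
    simp only [normKloosterman, ← sum_div, hsq]
    rw [le_div_iff₀ hR0, hre]
    have : ((-((2 * p + 3) * p ^ k : ℤ) : ℤ) : ℝ) ≤ _ := Int.cast_le.2 hlow
    push_cast at this ⊢
    linarith
  have hndvd : ∀ j ∈ Ico 1 p, ¬ p ∣ j := by
    intro j hj h
    rw [mem_Ico] at hj
    have := Nat.le_of_dvd (by omega) h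
    omega
  have hup : ∀ j ∈ Ico 2 p, normKloosterman (ψ' ^ j) a' ≤ 2 := by
    intro j hj
    rw [mem_Ico] at hj
    rw [hs j (hndvd j (mem_Ico.2 ⟨by omega, hj.2⟩)), Function.iterate_succ_apply']
    exact sub_le_self _ (sq_nonneg _)
  have h1 : normKloosterman (ψ' ^ 1) a' ≤ -(2 + 4 ^ (n + 2 + 1) * ε) := by
    rw [hs 1 (hndvd 1 (mem_Ico.2 ⟨le_rfl, by omega⟩)), pow_one]
    exact iterate_le hε0.le (by rw [hε]; linarith) _
  rw [sum_eq_sum_Ico_succ_bot (by omega)] at hlow'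
  have h3 := sum_le_card_nsmul _ _ _ hup
  rw [Nat.card_Ico, nsmul_eq_mul, Nat.cast_sub (by omega)] at h3
  push_cast at h3
  norm_num at hlow' h1 h3
  linarith

/-- **Weil's bound** for Kloosterman sums in odd characteristic. -/
theorem norm_kloosterman_le {F : Type} [Field F] [Fintype F] {p : ℕ} [Fact p.Prime] [CharP F p]
    (h2 : p ≠ 2) {ψ : AddChar F ℂ} (hψ : ψ ≠ 1) (hψp : ∀ x, ψ (x ^ p) = ψ x) {a : F}
    (ha : a ≠ 0) : ‖kloosterman ψ a‖ ≤ 2 * √(Fintype.card F) := by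
  have h := abs_normKloosterman_le h2 hψ hψp ha
  have hq : (0 : ℝ) < √(Fintype.card F) := Real.sqrt_pos.2 (by exact_mod_cast Fintype.card_pos)
  rw [normKloosterman, abs_div, abs_of_pos hq, div_le_iff₀ hq] at h
  rw [← ofReal_re_kloosterman, Complex.norm_real]
  exact h

/-! ### Gauss and Salié sums -/

/-- The character is the standard one of `ZMod p` composed with the trace, hence Frobenius-invariant. -/
theorem exists_addChar_frobenius (F : Type) [Field F] [Fintype F] {p : ℕ} [Fact p.Prime]
    [CharP F p] : ∃ ψ : AddChar F ℂ, ψ ≠ 1 ∧ ∀ x, ψ (x ^ p) = ψ x := by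
  let _ : Algebra (ZMod p) F := ZMod.algebra F p
  have : NeZero p := ⟨(Fact.out : p.Prime).ne_zero⟩
  refine ⟨(ZMod.stdAddChar (N := p)).compAddMonoidHom (Algebra.trace (ZMod p) F).toAddMonoidHom,
    ?_, fun x => ?_⟩
  · obtain ⟨a, ha⟩ := Algebra.trace_surjective (ZMod p) F 1
    intro h
    have h1 := DFunLike.congr_fun h a
    have h2 : ZMod.stdAddChar (N := p) 1 = 1 := by rw [← ha]; exact h1
    rw [← AddChar.map_zero_eq_one (ZMod.stdAddChar (N := p))] at h2
    exact one_ne_zero (ZMod.injective_stdAddChar h2)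
  · have h := Algebra.trace_eq_of_algEquiv (FiniteField.frobeniusAlgEquivOfAlgebraic (ZMod p) F) x
    rw [FiniteField.coe_frobeniusAlgEquivOfAlgebraic, ZMod.card] at h
    exact congrArg (ZMod.stdAddChar (N := p)) h

/-- The absolute value of the quadratic Gauss sum. -/
theorem norm_sum_quadraticChar_mul {F : Type*} [Field F] [Fintype F] [DecidableEq F]
    (h2 : ringChar F ≠ 2) {ψ : AddChar F ℂ} (hψ : ψ ≠ 1) :
    ‖∑ u, (quadraticChar F u : ℂ) * ψ u‖ = √(Fintype.card F) := by
  let χ : MulChar F ℂ := (quadraticChar F).ringHomComp (Int.castRingHom ℂ)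
  have h1 : χ ≠ 1 := by
    obtain ⟨ν, hν⟩ := quadraticChar_exists_neg_one h2
    intro h
    have h3 : χ ν = -1 := by simp [χ, MulChar.ringHomComp_apply, hν]
    have hν0 : ν ≠ 0 := by rintro rfl; simp at hν
    rw [h, MulChar.one_apply (Ne.isUnit hν0)] at h3
    norm_num at h3
  have h := gaussSum_sq h1 ((quadraticChar_isQuadratic F).comp _)
    (AddChar.IsPrimitive.of_ne_one hψ)
  have e : gaussSum χ ψ = ∑ u, (quadraticChar F u : ℂ) * ψ u := rfl
  rw [← e, eq_comm, Real.sqrt_eq_iff_mul_self_eq (by positivity) (norm_nonneg _), ← norm_mul,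
    ← pow_two, h, norm_mul, Complex.norm_natCast]
  have : ‖χ (-1)‖ = 1 := by
    have h4 : χ (-1) * χ (-1) = 1 := by
      rw [← map_mul, neg_mul_neg, one_mul, map_one]
    rcases mul_self_eq_one_iff.1 h4 with h | h <;> simp [h]
  rw [show ((quadraticChar F).ringHomComp (Int.castRingHom ℂ)) (-1) = χ (-1) from rfl, this, one_mul]

/-- The identity behind the evaluation of Salié sums. The sum `∑_{z ≠ 0} g((z + 1 / z) ^ 2 - 2)` is
computed by counting preimages in two ways, under `z ↦ z ^ 2 = w`, with argument `w + 1 / w`, and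
under `z ↦ z + 1 / z` followed by squaring; the comparison isolates the part twisted by `χ`. -/
theorem sum_quadraticChar_comp_add_inv {F : Type*} [Field F] [Fintype F] [DecidableEq F]
    (h2 : ringChar F ≠ 2) (g : F → ℂ) :
    ∑ w, (quadraticChar F w : ℂ) * g (w + w⁻¹)
      = ∑ u, ((quadraticChar F (u + 2) : ℂ) + quadraticChar F (u - 2)) * g u := by
  have hA := sum_comp_add_mul_inv h2 g (one_ne_zero (α := F))
  have hB : (∑ z, if z = 0 then 0 else g ((z + 1 * z⁻¹) ^ 2 - 2))
      = ∑ u, (1 + (quadraticChar F (u + 2) : ℂ)) * ((1 + (quadraticChar F (u - 2) : ℂ)) * g u) := by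
    rw [sum_comp_add_mul_inv h2 (fun z => g (z ^ 2 - 2)) one_ne_zero,
      sum_comp_sq h2 (fun v => (1 + (quadraticChar F (v - 4 * 1) : ℂ)) * g (v - 2)),
      ← Equiv.sum_comp (Equiv.addRight (2 : F))]
    refine sum_congr rfl fun u _ => ?_
    simp only [Equiv.coe_addRight]
    rw [show u + 2 - 4 * 1 = u - 2 by ring, add_sub_cancel_right]
  have hC : (∑ z, if z = 0 then 0 else g ((z + 1 * z⁻¹) ^ 2 - 2))
      = ∑ w, (1 + (quadraticChar F w : ℂ)) * if w = 0 then 0 else g (w + 1 * w⁻¹) := by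
    rw [← sum_comp_sq h2 (fun w => if w = 0 then 0 else g (w + 1 * w⁻¹))]
    refine sum_congr rfl fun z _ => ?_
    by_cases hz : z = 0
    · simp [hz]
    · rw [if_neg hz, if_neg (pow_ne_zero 2 hz)]
      congr 1
      field_simp
      ring
  have hD : ∑ w, (quadraticChar F w : ℂ) * g (w + w⁻¹)
      = ∑ w, (1 + (quadraticChar F w : ℂ)) * (if w = 0 then 0 else g (w + 1 * w⁻¹))
        - ∑ w, if w = 0 then 0 else g (w + 1 * w⁻¹) := by
    rw [← sum_sub_distrib]
    refine sum_congr rfl fun w _ => ?_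
    by_cases hw : w = 0
    · simp [hw]
    · rw [if_neg hw, one_mul]; ring
  rw [hD, ← hC, hB, hA, ← sum_sub_distrib]
  refine sum_congr rfl fun u _ => ?_
  rw [show u ^ 2 - 4 * 1 = (u + 2) * (u - 2) by ring, map_mul]
  push_cast
  ring

/-- Salié sums: if `a = c ^ 2` the sum is a Gauss sum times `ψ(2 * c) + ψ(-2 * c)` up to sign, and if
`a` is not a square the substitution `x ↦ a / x` shows that it vanishes. -/
theorem norm_salie_le {F : Type*} [Field F] [Fintype F] [DecidableEq F]
    (h2 : ringChar F ≠ 2) {ψ : AddChar F ℂ} (hψ : ψ ≠ 1) (a : F) :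
    ‖∑ x, (quadraticChar F x : ℂ) * ψ (x + a * x⁻¹)‖ ≤ 2 * √(Fintype.card F) := by
  by_cases ha : a = 0
  · simp only [ha, zero_mul, add_zero]
    rw [norm_sum_quadraticChar_mul h2 hψ]
    have := Real.sqrt_nonneg (Fintype.card F)
    linarith
  by_cases hs : IsSquare a
  · obtain ⟨c, rfl⟩ := hs
    have hc : c ≠ 0 := by rintro rfl; simp at ha
    set ψ' := AddChar.mulShift ψ c with hψ'
    have hψ1 : ψ' ≠ 1 := (AddChar.IsPrimitive.of_ne_one hψ) hc
    have e : ∑ x, (quadraticChar F x : ℂ) * ψ (x + c * c * x⁻¹)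
        = quadraticChar F c * ((ψ' (-2) + ψ' 2) * ∑ u, (quadraticChar F u : ℂ) * ψ' u) := by
      have e1 : ∑ w, (quadraticChar F w : ℂ) * ψ' (w + w⁻¹)
          = (ψ' (-2) + ψ' 2) * ∑ u, (quadraticChar F u : ℂ) * ψ' u := by
        rw [sum_quadraticChar_comp_add_inv h2 ψ']
        simp only [add_mul, sum_add_distrib]
        congr 1
        · rw [← Equiv.sum_comp (Equiv.subRight (2 : F)), mul_sum]
          refine sum_congr rfl fun u _ => ?_
          simp only [Equiv.subRight_apply]
          rw [sub_add_cancel, sub_eq_add_neg, AddChar.map_add_eq_mul]; ring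
        · rw [← Equiv.sum_comp (Equiv.addRight (2 : F)), mul_sum]
          refine sum_congr rfl fun u _ => ?_
          simp only [Equiv.coe_addRight]
          rw [add_sub_cancel_right, AddChar.map_add_eq_mul]; ring
      rw [← e1, ← Equiv.sum_comp (Equiv.mulLeft₀ c hc), mul_sum]
      refine sum_congr rfl fun w _ => ?_
      simp only [Equiv.mulLeft₀_apply, map_mul, hψ', AddChar.mulShift_apply]
      push_cast
      rw [mul_assoc]
      congr 3
      by_cases hw : w = 0
      · simp [hw]
      · field_simp
    have hn : ∀ x, ‖ψ' x‖ = 1 := fun x => AddChar.norm_apply ψ' x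
    rw [e, norm_mul, norm_mul, norm_sum_quadraticChar_mul h2 hψ1]
    have h1 : ‖(quadraticChar F c : ℂ)‖ = 1 := by
      rcases quadraticChar_dichotomy hc with h | h <;> simp [h]
    rw [h1, one_mul]
    gcongr
    refine (norm_add_le _ _).trans ?_
    rw [hn, hn]; norm_num
  · have h : ∑ x, (quadraticChar F x : ℂ) * ψ (x + a * x⁻¹)
        = -∑ x, (quadraticChar F x : ℂ) * ψ (x + a * x⁻¹) := by
      conv_lhs => rw [← Equiv.sum_comp ((Equiv.inv F).trans (Equiv.mulLeft₀ a ha))]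
      rw [← sum_neg_distrib]
      refine sum_congr rfl fun x _ => ?_
      simp only [Equiv.trans_apply, Equiv.inv_apply, Equiv.mulLeft₀_apply, map_mul,
        quadraticChar_neg_one_iff_not_isSquare.2 hs]
      by_cases hx : x = 0
      · simp [hx]
      have e1 : quadraticChar F x⁻¹ = quadraticChar F x := by
        have h1 : quadraticChar F x⁻¹ * quadraticChar F x = 1 := by
          rw [← map_mul, inv_mul_cancel₀ hx, map_one]
        rcases quadraticChar_dichotomy hx with h | h <;> rw [h] at h1 ⊢ <;> linarith
      rw [e1, show a * x⁻¹ + a * (a * x⁻¹)⁻¹ = x + a * x⁻¹ by field_simp; ring]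
      push_cast
      ring
    rw [self_eq_neg.1 h, norm_zero]
    positivity

theorem norm_twisted_le {F : Type} [Field F] [Fintype F] [DecidableEq F] {p : ℕ} [Fact p.Prime]
    [CharP F p] (h2 : p ≠ 2) {ψ : AddChar F ℂ} (hψ : ψ ≠ 1) (hψp : ∀ x, ψ (x ^ p) = ψ x)
    (a : F) (d : ℕ) :
    ‖∑ x, if x = 0 then 0 else (quadraticChar F x : ℂ) ^ d * ψ (x + a * x⁻¹)‖
      ≤ 2 * √(Fintype.card F) := by
  have hchar : ringChar F ≠ 2 := by rwa [ringChar.eq F p]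
  rcases Nat.even_or_odd d with hd | hd
  · have e : (∑ x, if x = 0 then 0 else (quadraticChar F x : ℂ) ^ d * ψ (x + a * x⁻¹))
        = kloosterman ψ a := by
      rw [kloosterman_eq]
      refine sum_congr rfl fun x _ => ?_
      split_ifs with hx
      · rfl
      · rcases quadraticChar_dichotomy hx with h | h <;> simp [h, hd]
    rw [e]
    by_cases ha : a = 0
    · rw [kloosterman, ha]
      simp only [zero_mul, add_zero]
      rw [AddChar.sum_eq_zero_of_ne_one hψ, zero_sub, norm_neg, norm_one]
      have : 1 ≤ √(Fintype.card F : ℝ) := by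
        rw [Real.one_le_sqrt]; exact_mod_cast Fintype.card_pos
      linarith
    · exact norm_kloosterman_le h2 hψ hψp ha
  · have e : (∑ x, if x = 0 then 0 else (quadraticChar F x : ℂ) ^ d * ψ (x + a * x⁻¹))
        = ∑ x, (quadraticChar F x : ℂ) * ψ (x + a * x⁻¹) := by
      refine sum_congr rfl fun x _ => ?_
      split_ifs with hx
      · simp [hx]
      · rcases quadraticChar_dichotomy hx with h | h <;> simp [h, hd]
    rw [e]
    exact norm_salie_le hchar hψ a

/-! ### Fourier analysis of the distance problem -/

theorem gauss_quadratic {F : Type*} [Field F] [Fintype F] [DecidableEq F]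
    (h2 : ringChar F ≠ 2) {ψ : AddChar F ℂ} (hψ : ψ ≠ 1) {s : F} (hs : s ≠ 0) :
    ∑ z, ψ (s * z ^ 2) = quadraticChar F s * ∑ u, (quadraticChar F u : ℂ) * ψ u := by
  rw [sum_comp_sq h2 (fun w => ψ (s * w))]
  simp only [add_mul, one_mul, sum_add_distrib]
  have h1 : ∑ w, ψ (s * w) = 0 := by
    have := AddChar.sum_mulShift s (AddChar.IsPrimitive.of_ne_one hψ)
    rw [if_neg hs, Nat.cast_zero] at this
    simpa only [mul_comm] using this
  rw [h1, zero_add]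
  conv_rhs => rw [← Equiv.sum_comp (Equiv.mulLeft₀ s hs), mul_sum]
  refine sum_congr rfl fun w _ => ?_
  simp only [Equiv.mulLeft₀_apply, map_mul]
  push_cast
  rw [← mul_assoc, ← mul_assoc]
  congr 1
  rcases quadraticChar_dichotomy hs with h | h <;> simp [h]

/-- Fourier expansion of the quadratic phase `z ↦ ψ(s * z ^ 2)`, obtained by completing the square. The
Gauss sum is kept on the left so that no division is needed. -/
theorem gaussian_fourier {F : Type*} [Field F] [Fintype F] [DecidableEq F]
    (h2 : ringChar F ≠ 2) {ψ : AddChar F ℂ} (hψ : ψ ≠ 1) {s : F} (hs : s ≠ 0) (z : F) :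
    ψ (s * z ^ 2) * (quadraticChar F (-1) * ∑ u, (quadraticChar F u : ℂ) * ψ u)
      = quadraticChar F s * ∑ m, ψ (-(m ^ 2 * (4 * s)⁻¹) + m * z) := by
  have h20 : (2 : F) ≠ 0 := Ring.two_ne_zero h2
  have h4 : (4 : F) ≠ 0 := by
    rw [show (4 : F) = 2 * 2 by norm_num]; exact mul_ne_zero h20 h20
  have h1 : ∑ m, ψ (-(m ^ 2 * (4 * s)⁻¹) + m * z)
      = ψ (s * z ^ 2) * ∑ m, ψ (-(4 * s)⁻¹ * m ^ 2) := by
    rw [← Equiv.sum_comp (Equiv.addRight (2 * s * z)), mul_sum]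
    refine sum_congr rfl fun m _ => ?_
    rw [← AddChar.map_add_eq_mul, Equiv.coe_addRight]
    congr 1
    field_simp
    ring
  have h3 : quadraticChar F (-(4 * s)⁻¹) = quadraticChar F (-1) * quadraticChar F s := by
    rw [show -(4 * s)⁻¹ = -1 * s * ((2 * s)⁻¹) ^ 2 by field_simp; norm_num, map_mul, map_mul,
      map_pow, quadraticChar_sq_one (inv_ne_zero (mul_ne_zero h20 hs)), mul_one]
  have h5 : (quadraticChar F s : ℂ) * quadraticChar F s = 1 := by
    rcases quadraticChar_dichotomy hs with h | h <;> simp [h]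
  rw [h1, gauss_quadratic h2 hψ (neg_ne_zero.2 (inv_ne_zero (mul_ne_zero h4 hs))), h3]
  push_cast
  linear_combination (-(ψ (s * z ^ 2) * (quadraticChar F (-1) : ℂ)
    * ∑ u, (quadraticChar F u : ℂ) * ψ u)) * h5

theorem addChar_map_sum {F : Type*} [Field F] (ψ : AddChar F ℂ) {ι : Type*} (s : Finset ι)
    (f : ι → F) : ψ (∑ i ∈ s, f i) = ∏ i ∈ s, ψ (f i) := by
  classical
  induction s using Finset.induction_on with
  | empty => simp
  | insert i s hi ih => rw [sum_insert hi, prod_insert hi, AddChar.map_add_eq_mul, ih]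

theorem gaussian_fourier_pi {F : Type*} [Field F] [Fintype F] [DecidableEq F]
    (h2 : ringChar F ≠ 2) {ψ : AddChar F ℂ} (hψ : ψ ≠ 1) {s : F} (hs : s ≠ 0) {d : ℕ}
    (z : Fin d → F) :
    ψ (s * ∑ i, z i ^ 2) * (quadraticChar F (-1) * ∑ u, (quadraticChar F u : ℂ) * ψ u) ^ d
      = ∑ m : Fin d → F, (quadraticChar F s : ℂ) ^ d * ψ (-((∑ i, m i ^ 2) * (4 * s)⁻¹))
        * ψ (∑ i, m i * z i) := by
  have h := fun i => gaussian_fourier h2 hψ hs (z i)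
  set G : ℂ := quadraticChar F (-1) * ∑ u, (quadraticChar F u : ℂ) * ψ u
  clear_value G
  have h' := Finset.prod_congr (rfl : (univ : Finset (Fin d)) = univ) fun i _ => h i
  rw [prod_mul_distrib, prod_mul_distrib, prod_const, prod_const, card_univ, Fintype.card_fin,
    prod_univ_sum, Fintype.piFinset_univ, ← addChar_map_sum, ← mul_sum] at h'
  rw [h', mul_sum]
  refine sum_congr rfl fun m _ => ?_
  rw [mul_assoc, ← AddChar.map_add_eq_mul, ← addChar_map_sum, sum_add_distrib, sum_mul,
    sum_neg_distrib]

/-- Orthogonality of the characters of `F ^ d`. -/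
theorem sum_addChar_dot {F : Type*} [Field F] [Fintype F] [DecidableEq F]
    {ψ : AddChar F ℂ} (hψ : ψ ≠ 1) {d : ℕ} (z : Fin d → F) :
    ∑ m : Fin d → F, ψ (∑ i, m i * z i) = if z = 0 then (Fintype.card F : ℂ) ^ d else 0 := by
  simp_rw [addChar_map_sum]
  rw [← Fintype.piFinset_univ, ← prod_univ_sum (fun _ => univ) (fun i x => ψ (x * z i))]
  simp_rw [AddChar.sum_mulShift _ (AddChar.IsPrimitive.of_ne_one hψ)]
  split_ifs with h
  · simp [h]
  · obtain ⟨i, hi⟩ := Function.ne_iff.1 h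
    exact prod_eq_zero (mem_univ i) (by simpa using hi)

theorem fourier_mul_conj {F : Type*} [Field F] [Fintype F] (ψ : AddChar F ℂ) {d : ℕ}
    (E : Finset (Fin d → F)) (m : Fin d → F) :
    ∑ x ∈ E, ∑ y ∈ E, ψ (∑ i, m i * (x - y) i)
      = ((‖∑ x ∈ E, ψ (∑ i, m i * x i)‖ ^ 2 : ℝ) : ℂ) := by
  push_cast
  rw [← Complex.mul_conj', map_sum, sum_mul_sum]
  refine sum_congr rfl fun x _ => sum_congr rfl fun y _ => ?_
  rw [← AddChar.map_neg_eq_conj, ← AddChar.map_add_eq_mul]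
  congr 1
  simp only [Pi.sub_apply, mul_sub, sum_sub_distrib]
  rw [sub_eq_add_neg]

theorem parseval {F : Type*} [Field F] [Fintype F] [DecidableEq F]
    {ψ : AddChar F ℂ} (hψ : ψ ≠ 1) {d : ℕ} (E : Finset (Fin d → F)) :
    ∑ m : Fin d → F, ‖∑ x ∈ E, ψ (∑ i, m i * x i)‖ ^ 2 = (Fintype.card F : ℝ) ^ d * #E := by
  have : ((∑ m : Fin d → F, ‖∑ x ∈ E, ψ (∑ i, m i * x i)‖ ^ 2 : ℝ) : ℂ)
      = (Fintype.card F : ℂ) ^ d * #E := by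
    rw [Complex.ofReal_sum, sum_congr rfl fun m _ => (fourier_mul_conj ψ E m).symm, sum_comm]
    simp_rw [sum_comm (s := (univ : Finset (Fin d → F))), sum_addChar_dot hψ, sub_eq_zero]
    rw [sum_congr rfl fun x hx => by rw [sum_ite_eq, if_pos hx], sum_const, nsmul_eq_mul, mul_comm]
  exact_mod_cast this

/-- The coefficient of the frequency `m`, with `N = ∑ m_i ^ 2`, in the expansion of the error term. The
substitution `s = -x / t` makes it a Kloosterman sum for even `d` and a Salié sum for odd `d`. -/
theorem norm_inner_le {F : Type} [Field F] [Fintype F] [DecidableEq F] {p : ℕ} [Fact p.Prime]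
    [CharP F p] (h2 : p ≠ 2) {ψ : AddChar F ℂ} (hψ : ψ ≠ 1) (hψp : ∀ x, ψ (x ^ p) = ψ x)
    {t : F} (ht : t ≠ 0) (N : F) (d : ℕ) :
    ‖∑ s ∈ univ.erase (0 : F), ψ (-(s * t)) * ((quadraticChar F s : ℂ) ^ d
      * ψ (-(N * (4 * s)⁻¹)))‖ ≤ 2 * √(Fintype.card F) := by
  have hchar : ringChar F ≠ 2 := by rwa [ringChar.eq F p]
  have h20 : (2 : F) ≠ 0 := Ring.two_ne_zero hchar
  have h4 : (4 : F) ≠ 0 := by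
    rw [show (4 : F) = 2 * 2 by norm_num]; exact mul_ne_zero h20 h20
  have hu : -t⁻¹ ≠ 0 := neg_ne_zero.2 (inv_ne_zero ht)
  have e : ∑ s ∈ univ.erase (0 : F), ψ (-(s * t)) * ((quadraticChar F s : ℂ) ^ d
      * ψ (-(N * (4 * s)⁻¹)))
      = (quadraticChar F (-t⁻¹) : ℂ) ^ d * ∑ x, if x = 0 then 0 else
        (quadraticChar F x : ℂ) ^ d * ψ (x + t * N * 4⁻¹ * x⁻¹) := by
    have e1 : univ.erase (0 : F) = univ.filter (fun s => s ≠ 0) := by ext; simp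
    rw [e1, sum_filter, ← Equiv.sum_comp (Equiv.mulLeft₀ _ hu), mul_sum]
    refine sum_congr rfl fun x _ => ?_
    simp only [Equiv.mulLeft₀_apply]
    by_cases hx : x = 0
    · simp [hx]
    rw [if_pos (mul_ne_zero hu hx), if_neg hx, map_mul, mul_left_comm, ← AddChar.map_add_eq_mul]
    push_cast
    rw [mul_pow, mul_assoc]
    congr 3
    field_simp
  rw [e, norm_mul, norm_pow]
  have h1 : ‖(quadraticChar F (-t⁻¹) : ℂ)‖ = 1 := by
    rcases quadraticChar_dichotomy hu with h | h <;> simp [h]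
  rw [h1, one_pow, one_mul]
  exact norm_twisted_le h2 hψ hψp _ d

/-- The contribution of the nontrivial additive characters to the number of pairs at distance `t`. -/
theorem norm_remainder_le {F : Type} [Field F] [Fintype F] [DecidableEq F] {p : ℕ} [Fact p.Prime]
    [CharP F p] (h2 : p ≠ 2) {ψ : AddChar F ℂ} (hψ : ψ ≠ 1) (hψp : ∀ x, ψ (x ^ p) = ψ x)
    {t : F} (ht : t ≠ 0) {d : ℕ} (E : Finset (Fin d → F)) :
    ‖∑ s ∈ univ.erase (0 : F), ∑ x ∈ E, ∑ y ∈ E, ψ (s * (∑ i, (x - y) i ^ 2 - t))‖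
      ≤ 2 * √(Fintype.card F) ^ (d + 1) * #E := by
  have hchar : ringChar F ≠ 2 := by rwa [ringChar.eq F p]
  set q : ℝ := (Fintype.card F : ℝ) with hq
  have hq0 : 0 < q := by rw [hq]; exact_mod_cast Fintype.card_pos
  set G : ℂ := quadraticChar F (-1) * ∑ u, (quadraticChar F u : ℂ) * ψ u with hG
  have hGn : ‖G‖ = √q := by
    rw [hG, norm_mul, norm_sum_quadraticChar_mul hchar hψ]
    rcases quadraticChar_dichotomy (neg_ne_zero.2 (one_ne_zero (α := F))) with h | h <;> simp [h, hq]
  -- Expanding every `ψ(s * ‖x - y‖)` in Fourier series makes the dependence on `E` a combination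
  -- of the squared Fourier coefficients of its indicator function.
  have key : (∑ s ∈ univ.erase (0 : F), ∑ x ∈ E, ∑ y ∈ E, ψ (s * (∑ i, (x - y) i ^ 2 - t))) * G ^ d
      = ∑ m : Fin d → F, (∑ s ∈ univ.erase (0 : F), ψ (-(s * t)) * ((quadraticChar F s : ℂ) ^ d
        * ψ (-((∑ i, m i ^ 2) * (4 * s)⁻¹))))
        * ((‖∑ x ∈ E, ψ (∑ i, m i * x i)‖ ^ 2 : ℝ) : ℂ) := by
    simp_rw [sum_mul]
    rw [sum_comm (s := (univ : Finset (Fin d → F)))]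
    refine sum_congr rfl fun s hs => ?_
    simp_rw [← fourier_mul_conj ψ E, mul_sum]
    rw [sum_comm (s := (univ : Finset (Fin d → F)))]
    refine sum_congr rfl fun x _ => ?_
    rw [sum_comm (s := (univ : Finset (Fin d → F)))]
    refine sum_congr rfl fun y _ => ?_
    have h := gaussian_fourier_pi hchar hψ (ne_of_mem_erase hs) (x - y)
    rw [mul_sub, sub_eq_neg_add, AddChar.map_add_eq_mul, mul_assoc, hG, h, mul_sum]
    refine sum_congr rfl fun m _ => ?_
    simp only [sum_mul, mul_assoc]
  have hs0 : 0 < √q := Real.sqrt_pos.2 hq0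
  have h1 := congrArg norm key
  rw [norm_mul, norm_pow, hGn] at h1
  refine le_of_mul_le_mul_right (a := √q ^ d) ?_ (by positivity)
  rw [h1]
  refine (norm_sum_le _ _).trans ?_
  calc _ ≤ ∑ m : Fin d → F, 2 * √q * ‖∑ x ∈ E, ψ (∑ i, m i * x i)‖ ^ 2 := by
        refine sum_le_sum fun m _ => ?_
        rw [norm_mul, Complex.norm_real, Real.norm_of_nonneg (sq_nonneg _)]
        exact mul_le_mul_of_nonneg_right (norm_inner_le h2 hψ hψp ht _ d) (sq_nonneg _)
    _ = 2 * √q * (q ^ d * #E) := by rw [← mul_sum, parseval hψ]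
    _ = _ := by
        have : q = √q * √q := (Real.mul_self_sqrt hq0.le).symm
        nth_rewrite 2 [this]
        ring

theorem abs_card_filter_sub_le {F : Type} [Field F] [Fintype F] [DecidableEq F]
    (hodd : Odd (Fintype.card F)) {t : F} (ht : t ≠ 0) {d : ℕ} (E : Finset (Fin d → F)) :
    |(#{w ∈ E ×ˢ E | ∑ i, (w.1 - w.2) i ^ 2 = t} : ℝ) - (#E : ℝ) ^ 2 / Fintype.card F|
      ≤ 2 * (Fintype.card F : ℝ) ^ (((d : ℝ) - 1) / 2) * #E := by
  obtain ⟨p, _⟩ := CharP.exists F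
  have hp : p.Prime := CharP.char_is_prime F p
  have : Fact p.Prime := ⟨hp⟩
  obtain ⟨k, hk0, hk⟩ := FiniteField.card F p
  have h2 : p ≠ 2 := by
    rintro rfl
    rw [hk] at hodd
    exact absurd hodd (by rw [Nat.not_odd_iff_even]; exact (Nat.even_pow.2 ⟨even_two, k.ne_zero⟩))
  obtain ⟨ψ, hψ, hψp⟩ := exists_addChar_frobenius F (p := p)
  have hrem := norm_remainder_le h2 hψ hψp ht E
  set q : ℝ := (Fintype.card F : ℝ) with hq
  have hq0 : 0 < q := by rw [hq]; exact_mod_cast Fintype.card_pos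
  set n := #{w ∈ E ×ˢ E | ∑ i, (w.1 - w.2) i ^ 2 = t} with hn
  have key : (((n : ℝ) * q - (#E : ℝ) ^ 2 : ℝ) : ℂ)
      = ∑ s ∈ univ.erase (0 : F), ∑ x ∈ E, ∑ y ∈ E, ψ (s * (∑ i, (x - y) i ^ 2 - t)) := by
    have h1 : ∑ s : F, ∑ x ∈ E, ∑ y ∈ E, ψ (s * (∑ i, (x - y) i ^ 2 - t)) = n * q := by
      rw [sum_comm]
      simp_rw [sum_comm (s := (univ : Finset F)),
        AddChar.sum_mulShift _ (AddChar.IsPrimitive.of_ne_one hψ), sub_eq_zero]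
      simp only [Nat.cast_ite, Nat.cast_zero]
      rw [← sum_product' E E (fun x y => if ∑ i, (x - y) i ^ 2 = t then (Fintype.card F : ℂ) else 0),
        ← sum_filter]
      simp [hn, hq]
    rw [← sum_erase_add _ _ (mem_univ (0 : F))] at h1
    simp only [zero_mul, AddChar.map_zero_eq_one, sum_const, nsmul_eq_mul, mul_one] at h1
    push_cast
    linear_combination -h1
  rw [← key, Complex.norm_real, Real.norm_eq_abs] at hrem
  have e : (n : ℝ) - (#E : ℝ) ^ 2 / q = ((n : ℝ) * q - (#E : ℝ) ^ 2) / q := by field_simp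
  rw [e, abs_div, abs_of_pos hq0, div_le_iff₀ hq0]
  refine hrem.trans (le_of_eq ?_)
  have e2 : √q ^ (d + 1) = q ^ (((d : ℝ) - 1) / 2) * q := by
    rw [Real.sqrt_eq_rpow, ← Real.rpow_natCast, ← Real.rpow_mul hq0.le]
    nth_rewrite 3 [← Real.rpow_one q]
    rw [← Real.rpow_add hq0]
    congr 1
    push_cast; ring
  rw [e2]; ring

end

/-- Distance counting: for `t ≠ 0`,
`|{(x,y) ∈ E² : ‖x−y‖ = t}| = |E|² q⁻¹ + O(q^{(d−1)/2}|E|)`. -/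
theorem stmt_5 :
    ∃ C > (0 : ℝ),
      ∀ (F : Type) [Field F] [Fintype F],
        Odd (Fintype.card F) →
        ∀ (d : ℕ), 2 ≤ d →
        ∀ (E : Set (Fin d → F)) (t : F), t ≠ 0 →
          |(Set.ncard { p : (Fin d → F) × (Fin d → F) |
              p.1 ∈ E ∧ p.2 ∈ E ∧ (∑ i, (p.1 i - p.2 i) ^ 2) = t } : ℝ)
            - (E.ncard : ℝ) ^ 2 / (Fintype.card F : ℝ)|
          ≤ C * (Fintype.card F : ℝ) ^ (((d : ℝ) - 1) / 2) * (E.ncard : ℝ) := by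
  refine ⟨2, two_pos, fun F _ _ hodd d _ E t ht => ?_⟩
  classical
  have h := abs_card_filter_sub_le hodd ht E.toFinset
  have e1 : E.ncard = Finset.card E.toFinset := Set.ncard_eq_toFinset_card' E
  have e2 : Set.ncard { p : (Fin d → F) × (Fin d → F) |
      p.1 ∈ E ∧ p.2 ∈ E ∧ (∑ i, (p.1 i - p.2 i) ^ 2) = t }
      = Finset.card {w ∈ E.toFinset ×ˢ E.toFinset | ∑ i, (w.1 - w.2) i ^ 2 = t} := by
    rw [← Set.ncard_coe_finset]
    congr 1
    ext w
    simp [and_assoc]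
  rw [e1, e2]
  exact h
end
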